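/- arXiv:1903.11051 — 9 statements merged into one kernel-verified Lean document; each statement's English description precedes it below -/
import Mathlib

section
/- Let k be a field, A a finite-dimensional k-algebra, and k' a finite Galois extension of k with Galois group Γ = Gal(k'/k), acting on the k'-algebra A ⊗_k k' through the second tensor factor. Then the first (nonabelian) cohomology of Γ with values in the unit group (A ⊗_k k')^× is trivial: for every map c : Γ → (A ⊗_k k')^× satisfying the cocycle condition c(στ) = c(σ) · σ(c(τ)) for all σ, τ ∈ Γ, there exists b ∈ (A ⊗_k k')^× such that c(σ) = b · σ(b)⁻¹ for all σ ∈ Γ. -/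
open scoped TensorProduct

/-- The action of `σ ∈ Gal(k'/k)` on `A ⊗[k] k'` through the second tensor factor. -/
noncomputable def tensorGalAut (k : Type*) [Field k] (k' : Type*) [Field k'] [Algebra k k']
    (A : Type*) [Ring A] [Algebra k A] (σ : k' ≃ₐ[k] k') :
    (A ⊗[k] k') ≃ₐ[k] (A ⊗[k] k') :=
  Algebra.TensorProduct.congr AlgEquiv.refl σ

/-- The induced action of `σ ∈ Gal(k'/k)` on the unit group `(A ⊗[k] k')ˣ`. -/
noncomputable def tensorGalActUnits (k : Type*) [Field k] (k' : Type*) [Field k'] [Algebra k k']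
    (A : Type*) [Ring A] [Algebra k A] (σ : k' ≃ₐ[k] k') :
    (A ⊗[k] k')ˣ →* (A ⊗[k] k')ˣ :=
  Units.map (tensorGalAut k k' A σ).toAlgHom.toRingHom.toMonoidHom


namespace KneserAux

section
variable (k : Type*) [Field k] {A : Type*} [Ring A] [Algebra k A]

theorem split_of_surj {S T : Type*} [AddCommGroup S] [Module A S] [AddCommGroup T] [Module A T]
    [IsSemisimpleModule A S] (f : S →ₗ[A] T) (hf : Function.Surjective f) :
    Nonempty ((LinearMap.ker f × T) ≃ₗ[A] S) := by
  obtain ⟨q, hq⟩ := exists_isCompl (LinearMap.ker f)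
  exact ⟨((LinearEquiv.refl A _).prodCongr ((f.quotKerEquivOfSurjective hf).symm.trans
    (Submodule.quotientEquivOfIsCompl _ q hq))).trans (Submodule.prodEquivOfIsCompl _ q hq)⟩

theorem finrank_le_of_surj {V W : Type*} [AddCommGroup V] [Module k V] [AddCommGroup W]
    [Module k W] [FiniteDimensional k V] {f : V →ₗ[k] W} (hf : Function.Surjective f) :
    Module.finrank k W ≤ Module.finrank k V := by
  rw [← finrank_top k W, ← LinearMap.range_eq_top.mpr hf]
  exact LinearMap.finrank_range_le f

theorem finite_hom (N T : Type*) [AddCommGroup N] [Module A N] [Module k N] [IsScalarTower k A N]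
    [AddCommGroup T] [Module A T] [Module k T] [IsScalarTower k A T]
    [FiniteDimensional k N] [FiniteDimensional k T] : FiniteDimensional k (N →ₗ[A] T) :=
  FiniteDimensional.of_injective (LinearMap.restrictScalarsₗ k A N T k)
    (LinearMap.restrictScalars_injective k)

variable [FiniteDimensional k A]

theorem exists_surj (n : ℕ) : ∀ (N : Type*) (S : Type*) [AddCommGroup N] [Module A N] [Module k N]
    [IsScalarTower k A N] [FiniteDimensional k N] [AddCommGroup S] [Module A S] [Module k S]
    [IsScalarTower k A S] [FiniteDimensional k S] [IsSemisimpleModule A N] [IsSemisimpleModule A S]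
    (_ : Module.finrank k N = n)
    (_ : ∀ I : Ideal A, I.IsMaximal → Module.finrank k (N →ₗ[A] (A ⧸ I)) ≤
      Module.finrank k (S →ₗ[A] (A ⧸ I))),
    ∃ f : S →ₗ[A] N, Function.Surjective f := by
  induction n using Nat.strong_induction_on with
  | _ n ih =>
  intro N S _ _ _ _ _ _ _ _ _ _ _ _ hn h
  rcases subsingleton_or_nontrivial N with hN | hN
  · exact ⟨0, fun x => ⟨0, Subsingleton.elim _ _⟩⟩
  obtain ⟨W, hW, -⟩ := (eq_top_or_exists_le_coatom (⊥ : Submodule A N)).resolve_left bot_ne_top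
  have : IsSimpleModule A (N ⧸ W) := isSimpleModule_iff_isCoatom.mpr hW
  obtain ⟨I, hI, ⟨e⟩⟩ := isSimpleModule_iff_quot_maximal.mp this
  have hT : IsSimpleModule A (A ⧸ I) := isSimpleModule_iff_isCoatom.mpr hI.out
  have := hT.nontrivial
  let g : N →ₗ[A] (A ⧸ I) := e.toLinearMap ∘ₗ W.mkQ
  have hg : Function.Surjective g := e.surjective.comp W.mkQ_surjective
  have hg0 : g ≠ 0 := by
    rintro h0
    obtain ⟨x, hx⟩ := exists_ne (0 : A ⧸ I)
    obtain ⟨y, rfl⟩ := hg x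
    exact hx (by rw [h0]; rfl)
  have := finite_hom k (A := A) N (A ⧸ I)
  have h1 : 0 < Module.finrank k (N →ₗ[A] (A ⧸ I)) := 
    Module.finrank_pos_iff_exists_ne_zero.mpr ⟨g, hg0⟩
  have := finite_hom k (A := A) S (A ⧸ I)
  obtain ⟨f, hf0⟩ := Module.finrank_pos_iff_exists_ne_zero.mp (h1.trans_le (h I hI))
  have hf := LinearMap.surjective_of_ne_zero hf0
  obtain ⟨e1⟩ := split_of_surj g hg
  obtain ⟨e2⟩ := split_of_surj f hf
  have : FiniteDimensional k (LinearMap.ker g) :=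
    FiniteDimensional.of_injective ((LinearMap.ker g).subtype.restrictScalars k)
      Subtype.val_injective
  have : FiniteDimensional k (LinearMap.ker f) :=
    FiniteDimensional.of_injective ((LinearMap.ker f).subtype.restrictScalars k)
      Subtype.val_injective
  have key : ∀ I' : Ideal A, I'.IsMaximal →
      Module.finrank k (LinearMap.ker g →ₗ[A] (A ⧸ I')) ≤
      Module.finrank k (LinearMap.ker f →ₗ[A] (A ⧸ I')) := by
    intro I' hI'
    have h2 := h I' hI'
    have := finite_hom k (A := A) (LinearMap.ker g) (A ⧸ I')
    have := finite_hom k (A := A) (LinearMap.ker f) (A ⧸ I')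
    have := finite_hom k (A := A) (A ⧸ I) (A ⧸ I')
    rw [← (LinearEquiv.congrLeft (A ⧸ I') k e1).finrank_eq,
      ← (LinearEquiv.congrLeft (A ⧸ I') k e2).finrank_eq,
      ← (LinearMap.coprodEquiv k).finrank_eq, ← (LinearMap.coprodEquiv k).finrank_eq,
      Module.finrank_prod, Module.finrank_prod] at h2
    omega
  have hlt : Module.finrank k (LinearMap.ker g) < n := by
    have h3 := (e1.restrictScalars k).finrank_eq
    rw [Module.finrank_prod, hn] at h3
    have : 0 < Module.finrank k (A ⧸ I) := Module.finrank_pos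
    omega
  obtain ⟨u, hu⟩ := ih _ hlt (LinearMap.ker g) (LinearMap.ker f) rfl key
  exact ⟨e1.toLinearMap ∘ₗ (u.prodMap LinearMap.id) ∘ₗ e2.symm.toLinearMap,
    e1.surjective.comp ((Function.Surjective.prodMap hu Function.surjective_id).comp
      e2.symm.surjective)⟩

theorem cyclic {ι : Type*} [Finite ι] [Nonempty ι] (M : Type*) [AddCommGroup M] [Module A M]
    [Module k M] [IsScalarTower k A M] [FiniteDimensional k M] (e : (ι → M) ≃ₗ[A] (ι → A)) :
    ∃ m : M, Submodule.span A {m} = ⊤ := by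
  have := Fintype.ofFinite ι
  classical
  have : IsArtinian k A := inferInstance
  have : IsArtinian A A := isArtinian_of_tower k inferInstance
  have : IsArtinian A M := isArtinian_of_tower k inferInstance
  have : Module.Finite A M := Module.Finite.of_restrictScalars_finite k A M
  have : IsSemisimpleModule A (M ⧸ Module.jacobson A M) :=
    (IsArtinian.isSemisimpleModule_iff_jacobson A _).mpr (Module.jacobson_quotient_jacobson A M)
  have : IsSemisimpleModule A (A ⧸ Module.jacobson A A) :=
    (IsArtinian.isSemisimpleModule_iff_jacobson A _).mpr (Module.jacobson_quotient_jacobson A A)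
  obtain ⟨f, hf⟩ := exists_surj k (A := A) _ (M ⧸ Module.jacobson A M) (A ⧸ Module.jacobson A A) rfl (by
    intro I hI
    have hT : IsSimpleModule A (A ⧸ I) := isSimpleModule_iff_isCoatom.mpr hI.out
    have := finite_hom k (A := A) M (A ⧸ I)
    have := finite_hom k (A := A) A (A ⧸ I)
    have := finite_hom k (A := A) (A ⧸ Module.jacobson A A) (A ⧸ I)
    have h1 : Module.finrank k ((M ⧸ Module.jacobson A M) →ₗ[A] (A ⧸ I)) ≤
        Module.finrank k (M →ₗ[A] (A ⧸ I)) :=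
      LinearMap.finrank_le_finrank_of_injective
        (f := LinearMap.lcomp k (A ⧸ I) (Module.jacobson A M).mkQ)
        (fun x y h => LinearMap.ext fun z => by
          obtain ⟨z, rfl⟩ := Submodule.mkQ_surjective _ z
          exact congrArg (fun φ => φ z) h)
    have h2 : Module.finrank k (A →ₗ[A] (A ⧸ I)) ≤
        Module.finrank k ((A ⧸ Module.jacobson A A) →ₗ[A] (A ⧸ I)) :=
      finrank_le_of_surj k
        (f := LinearMap.lcomp k (A ⧸ I) (Module.jacobson A A).mkQ)
        (fun x => by
          have hx : Module.jacobson A A ≤ LinearMap.ker x := by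
            have := Module.le_comap_jacobson x
            rwa [IsSemisimpleModule.jacobson_eq_bot A (A ⧸ I)] at this
          exact ⟨Submodule.liftQ (Module.jacobson A A) x hx,
            Submodule.liftQ_mkQ (Module.jacobson A A) x hx⟩)
    have h3 : Module.finrank k (M →ₗ[A] (A ⧸ I)) = Module.finrank k (A →ₗ[A] (A ⧸ I)) := by
      have hfr : Module.Free k (M →ₗ[A] (A ⧸ I)) := Module.Free.of_divisionRing k _
      have hfr' : Module.Free k (A →ₗ[A] (A ⧸ I)) := Module.Free.of_divisionRing k _
      have h4 := (LinearEquiv.congrLeft (A ⧸ I) k e).finrank_eq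
      rw [← (LinearMap.lsum A (fun _ : ι => M) k).finrank_eq,
        ← (LinearMap.lsum A (fun _ : ι => A) k).finrank_eq, Module.finrank_pi_fintype,
        Module.finrank_pi_fintype] at h4
      simpa using h4
    omega)
  obtain ⟨m, hm⟩ := Submodule.mkQ_surjective _ (f (Submodule.Quotient.mk 1))
  refine ⟨m, ?_⟩
  by_contra hne
  obtain ⟨W, hW, hle⟩ := (eq_top_or_exists_le_coatom (Submodule.span A {m})).resolve_left hne
  apply hW.1
  rw [eq_top_iff]
  rintro x -
  obtain ⟨y, hy⟩ := hf (Submodule.mkQ _ x)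
  obtain ⟨a, rfl⟩ := Submodule.mkQ_surjective _ y
  have : (Module.jacobson A M).mkQ (a • m - x) = 0 := by
    rw [map_sub, map_smul, hm, ← hy, ← map_smul, sub_eq_zero]
    congr 1
    change Submodule.Quotient.mk (a • (1 : A)) = Submodule.Quotient.mk a
    rw [smul_eq_mul, mul_one]
  have h5 : a • m - x ∈ W := (sInf_le hW : Module.jacobson A M ≤ W) 
    ((Submodule.Quotient.mk_eq_zero _).mp this)
  have h6 : a • m ∈ W := W.smul_mem _ (hle (Submodule.mem_span_singleton_self m))
  simpa using W.sub_mem h6 h5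

end

theorem dual_sum (k k' : Type*) [Field k] [Field k'] [Algebra k k'] [FiniteDimensional k k']
    [IsGalois k k'] {ι : Type*} [Fintype ι] [DecidableEq ι] (b : Module.Basis ι k k') 
    (σ : k' ≃ₐ[k] k') [Decidable (σ = 1)] :
    ∑ i, b i * σ (b.traceDual i) = if σ = 1 then 1 else 0 := by
  classical
  let P : Matrix ι (k' ≃ₐ[k] k') k' := fun i σ => σ (b.traceDual i)
  let Q : Matrix (k' ≃ₐ[k] k') ι k' := fun σ i => σ (b i)
  have hcard : Fintype.card ι = Fintype.card (k' ≃ₐ[k] k') := by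
    rw [← Module.finrank_eq_card_basis b, ← IsGalois.card_aut_eq_finrank, Nat.card_eq_fintype_card]
  have h1 : P * Q = 1 := by
    ext i j
    rw [Matrix.mul_apply, Matrix.one_apply]
    simp only [P, Q, ← map_mul]
    rw [← trace_eq_sum_automorphisms, Module.Basis.trace_traceDual_mul]
    by_cases h : i = j <;> simp [h, eq_comm]
  have h2 := congrFun (congrFun ((Matrix.mul_eq_one_comm_of_card_eq _ _ _ hcard).mp h1) 1) σ
  rw [Matrix.mul_apply, Matrix.one_apply] at h2
  simpa [P, Q, eq_comm] using h2

section
variable {k : Type*} [Field k] {k' : Type*} [Field k'] [Algebra k k']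
    {A : Type*} [Ring A] [Algebra k A]

/-- The embedding of `k'` in the tensor product. -/
noncomputable def emb : k' →ₐ[k] A ⊗[k] k' := Algebra.TensorProduct.includeRight

theorem emb_comm (y : k') (x : A ⊗[k] k') : emb y * x = x * emb y := by
  induction x using TensorProduct.induction_on with
  | zero => simp
  | tmul a z => simp [emb, mul_comm]
  | add x y hx hy => rw [mul_add, add_mul, hx, hy]

theorem act_emb (σ : k' ≃ₐ[k] k') (y : k') :
    tensorGalAut k k' A σ (emb y) = emb (σ y) := by
  simp [tensorGalAut, emb]

theorem act_smul (σ : k' ≃ₐ[k] k') (a : A) (x : A ⊗[k] k') :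
    tensorGalAut k k' A σ (a • x) = a • tensorGalAut k k' A σ x := by
  induction x using TensorProduct.induction_on with
  | zero => simp
  | tmul b z => simp [tensorGalAut, TensorProduct.smul_tmul']
  | add x y hx hy => rw [smul_add, map_add, hx, hy, map_add, smul_add]

theorem act_mul (σ τ : k' ≃ₐ[k] k') (x : A ⊗[k] k') :
    tensorGalAut k k' A (σ * τ) x = tensorGalAut k k' A σ (tensorGalAut k k' A τ x) := by
  induction x using TensorProduct.induction_on with
  | zero => simp
  | tmul b z => simp [tensorGalAut]
  | add x y hx hy => rw [map_add, hx, hy, map_add, map_add]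

theorem act_one (x : A ⊗[k] k') : tensorGalAut k k' A 1 x = x := by
  induction x using TensorProduct.induction_on with
  | zero => simp
  | tmul b z => simp [tensorGalAut]
  | add x y hx hy => rw [map_add, hx, hy]

theorem smul_mul_l (a : A) (x y : A ⊗[k] k') : (a • x) * y = a • (x * y) := by
  have h : ∀ x : A ⊗[k] k', a • x = (a ⊗ₜ[k] (1 : k')) * x := by
    intro x
    induction x using TensorProduct.induction_on with
    | zero => simp
    | tmul b z => simp [TensorProduct.smul_tmul']
    | add x y hx hy => rw [smul_add, hx, hy, mul_add]
  rw [h, h, mul_assoc]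

/-- Fixed points of the twisted action. -/
def fixedMod (c : (k' ≃ₐ[k] k') → (A ⊗[k] k')ˣ) : Submodule A (A ⊗[k] k') where
  carrier := {x | ∀ σ, tensorGalAut k k' A σ x = x * c σ}
  zero_mem' := fun σ => by simp
  add_mem' := fun hx hy σ => by rw [map_add, hx σ, hy σ, add_mul]
  smul_mem' := fun a x hx σ => by rw [act_smul, hx σ, smul_mul_l]

/-- The descent map. -/
noncomputable def descMap (c : (k' ≃ₐ[k] k') → (A ⊗[k] k')ˣ) {ι : Type*} [Fintype ι]
    (b : ι → k') : (ι → fixedMod c) →ₗ[A] A ⊗[k] k' where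
  toFun m := ∑ i, (m i : A ⊗[k] k') * emb (b i)
  map_add' m n := by simp [add_mul, Finset.sum_add_distrib]
  map_smul' a m := by simp [smul_mul_l, Finset.smul_sum]

variable [FiniteDimensional k k'] [IsGalois k k']

theorem cocycle_inv {c : (k' ≃ₐ[k] k') → (A ⊗[k] k')ˣ}
    (hc : ∀ σ τ : k' ≃ₐ[k] k', c (σ * τ) = c σ * tensorGalActUnits k k' A σ (c τ))
    (σ τ : k' ≃ₐ[k] k') :
    tensorGalAut k k' A σ (↑(c τ)⁻¹ : A ⊗[k] k') = ↑(c (σ * τ))⁻¹ * ↑(c σ) := by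
  have h : tensorGalAut k k' A σ (↑(c τ)⁻¹ : A ⊗[k] k') =
      ↑(tensorGalActUnits k k' A σ (c τ))⁻¹ := by
    rw [← map_inv]; rfl
  rw [h, ← Units.val_mul]
  congr 1
  rw [hc]; group

/-- Twisted trace. -/
noncomputable def twTrace {c : (k' ≃ₐ[k] k') → (A ⊗[k] k')ˣ}
    (hc : ∀ σ τ : k' ≃ₐ[k] k', c (σ * τ) = c σ * tensorGalActUnits k k' A σ (c τ))
    (x : A ⊗[k] k') : fixedMod c :=
  ⟨∑ σ : k' ≃ₐ[k] k', tensorGalAut k k' A σ x * ↑(c σ)⁻¹, fun τ => by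
    rw [map_sum, Finset.sum_mul]
    refine Fintype.sum_equiv (Equiv.mulLeft τ) _ _ fun σ => ?_
    rw [map_mul, cocycle_inv hc, ← act_mul, Equiv.coe_mulLeft, mul_assoc]⟩

theorem descMap_bij {c : (k' ≃ₐ[k] k') → (A ⊗[k] k')ˣ}
    (hc : ∀ σ τ : k' ≃ₐ[k] k', c (σ * τ) = c σ * tensorGalActUnits k k' A σ (c τ))
    {ι : Type*} [Fintype ι] [DecidableEq ι] (b : Module.Basis ι k k') :
    Function.Bijective (descMap c b) := by
  classical
  have hc1 : c 1 = 1 := by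
    have h := hc 1 1
    have h' : tensorGalActUnits k k' A 1 (c 1) = c 1 := Units.ext (act_one _)
    rw [h', mul_one] at h
    exact (mul_eq_left.mp h.symm)
  refine Function.bijective_iff_has_inverse.mpr
    ⟨fun x i => twTrace hc (x * emb (b.traceDual i)), fun m => ?_, fun x => ?_⟩
  · funext j
    apply Subtype.ext
    change ∑ σ : k' ≃ₐ[k] k', tensorGalAut k k' A σ
      ((∑ i, (m i : A ⊗[k] k') * emb (b i)) * emb (b.traceDual j)) * ↑(c σ)⁻¹ = _
    have h1 : ∀ σ : k' ≃ₐ[k] k', tensorGalAut k k' A σ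
        ((∑ i, (m i : A ⊗[k] k') * emb (b i)) * emb (b.traceDual j)) * ↑(c σ)⁻¹ =
        ∑ i, (m i : A ⊗[k] k') * emb (σ (b i * b.traceDual j)) := by
      intro σ
      rw [Finset.sum_mul, map_sum, Finset.sum_mul]
      refine Finset.sum_congr rfl fun i _ => ?_
      rw [mul_assoc, ← map_mul, map_mul (tensorGalAut k k' A σ), act_emb, (m i).2 σ, mul_assoc,
        mul_assoc, emb_comm, Units.mul_inv_cancel_left]
    rw [Finset.sum_congr rfl fun σ _ => h1 σ, Finset.sum_comm]
    simp_rw [← Finset.mul_sum, ← map_sum, ← trace_eq_sum_automorphisms,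
      Module.Basis.trace_mul_traceDual]
    simp
  · change ∑ i, (∑ σ : k' ≃ₐ[k] k', tensorGalAut k k' A σ (x * emb (b.traceDual i)) * ↑(c σ)⁻¹) *
      emb (b i) = x
    simp_rw [Finset.sum_mul]
    rw [Finset.sum_comm]
    have h1 : ∀ σ : k' ≃ₐ[k] k', ∑ i, tensorGalAut k k' A σ (x * emb (b.traceDual i)) *
        (↑(c σ)⁻¹ : A ⊗[k] k') * emb (b i) = tensorGalAut k k' A σ x * (↑(c σ)⁻¹ : A ⊗[k] k') *
        emb (if σ = 1 then (1 : k') else 0) := by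
      intro σ
      rw [← dual_sum k k' b σ, map_sum, Finset.mul_sum]
      refine Finset.sum_congr rfl fun i _ => ?_
      rw [map_mul (tensorGalAut k k' A σ), act_emb, mul_comm (b i), map_mul emb]
      simp only [mul_assoc]
      rw [← mul_assoc (emb (σ _)), emb_comm (σ _) (↑(c σ)⁻¹ : A ⊗[k] k'), mul_assoc]
    rw [Finset.sum_congr rfl fun σ _ => h1 σ, Finset.sum_eq_single 1]
    · simp [hc1, act_one]
    · intro σ _ h; simp [h]
    · simp

end

end KneserAux

/-- Lemma 2.1 (Kneser): for a finite-dimensional algebra `A` over a field `k` and a finite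
Galois extension `k'/k`, every 1-cocycle of `Gal(k'/k)` valued in `(A ⊗[k] k')ˣ` is a
coboundary, i.e. `H¹(Gal(k'/k), (A ⊗[k] k')ˣ)` is trivial. -/
theorem stmt_0 (k : Type*) [Field k] (k' : Type*) [Field k'] [Algebra k k']
    [FiniteDimensional k k'] [IsGalois k k']
    (A : Type*) [Ring A] [Algebra k A] [FiniteDimensional k A]
    (c : (k' ≃ₐ[k] k') → (A ⊗[k] k')ˣ)
    (hc : ∀ σ τ : k' ≃ₐ[k] k',
      c (σ * τ) = c σ * tensorGalActUnits k k' A σ (c τ)) :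
    ∃ b : (A ⊗[k] k')ˣ, ∀ σ : k' ≃ₐ[k] k',
      c σ = b * (tensorGalActUnits k k' A σ b)⁻¹ := by
  classical
  let b := Module.finBasis k k'
  have : Nonempty (Fin (Module.finrank k k')) := ⟨⟨0, Module.finrank_pos⟩⟩
  have hbij := KneserAux.descMap_bij hc b
  let e := (LinearEquiv.ofBijective (KneserAux.descMap c b) hbij).trans
    (Algebra.TensorProduct.basis A b).equivFun
  have : FiniteDimensional k (KneserAux.fixedMod c) :=
    FiniteDimensional.of_injective ((KneserAux.fixedMod c).subtype.restrictScalars k)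
      Subtype.val_injective
  obtain ⟨m, hm⟩ := KneserAux.cyclic k (KneserAux.fixedMod c) e
  obtain ⟨n, hn⟩ := hbij.2 1
  have hr : ∀ i, ∃ a : A, a • m = n i := fun i => by
    have : n i ∈ Submodule.span A {m} := by rw [hm]; trivial
    exact Submodule.mem_span_singleton.mp this
  choose a ha using hr
  let y : A ⊗[k] k' := ∑ i, a i • KneserAux.emb (b i)
  have hy : y * (m : A ⊗[k] k') = 1 := by
    rw [← hn]
    change _ = ∑ i, (n i : A ⊗[k] k') * KneserAux.emb (b i)
    rw [Finset.sum_mul]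
    refine Finset.sum_congr rfl fun i _ => ?_
    rw [← ha i, KneserAux.smul_mul_l, KneserAux.emb_comm, Submodule.coe_smul,
      KneserAux.smul_mul_l]
  have : IsArtinianRing (A ⊗[k] k') := isArtinian_of_tower k inferInstance
  have hy' : (m : A ⊗[k] k') * y = 1 := mul_eq_one_symm hy
  refine ⟨⟨y, m, hy, hy'⟩, fun σ => ?_⟩
  apply Units.ext
  have h1 : ((tensorGalActUnits k k' A σ ⟨y, m, hy, hy'⟩)⁻¹ : (A ⊗[k] k')ˣ) =
    (tensorGalAut k k' A σ (m : A ⊗[k] k')) := rfl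
  rw [Units.val_mul, h1, m.2 σ]
  change _ = y * _
  rw [← mul_assoc, hy, one_mul]
end

section
/- Let Γ be a finite group acting by group automorphisms on a group K̃, let K̃' be a Γ-stable subgroup of K̃, and set K = K̃^Γ (the Γ-fixed points) and K' = (K̃')^Γ. Let k ∈ K; then the subgroup k K̃' k⁻¹ ∩ K̃' is Γ-stable. If every 1-cocycle of Γ with values in k K̃' k⁻¹ ∩ K̃' is a coboundary, then the Γ-fixed points of the double coset K̃' k K̃' are exactly K' k K': (K̃' k K̃')^Γ = K' k K'. -/
/-- Lemma 2.2 (Galois descent for double cosets): let a finite group `Γ` act by group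
automorphisms on a group `K̃`, let `K'` be a `Γ`-stable subgroup and `k` a `Γ`-fixed element.
Then `k K̃' k⁻¹ ∩ K̃'` is `Γ`-stable (note `x ∈ k K̃' k⁻¹ ↔ k⁻¹ * x * k ∈ K̃'`), and if every
1-cocycle of `Γ` with values in `k K̃' k⁻¹ ∩ K̃'` is a coboundary, then
`(K̃' k K̃')^Γ = K' k K'` where `K' = (K̃')^Γ`. -/
theorem stmt_1 (Γ Kt : Type*) [Group Γ] [Finite Γ] [Group Kt]
    [MulDistribMulAction Γ Kt]
    (K' : Subgroup Kt) (hK' : ∀ (σ : Γ) (x : Kt), x ∈ K' → σ • x ∈ K')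
    (k : Kt) (hk : ∀ σ : Γ, σ • k = k)
    (hcoc : ∀ c : Γ → Kt,
        (∀ σ, c σ ∈ K' ∧ k⁻¹ * c σ * k ∈ K') →
        (∀ σ τ, c (σ * τ) = c σ * σ • c τ) →
        ∃ b : Kt, (b ∈ K' ∧ k⁻¹ * b * k ∈ K') ∧ ∀ σ, c σ = b * (σ • b)⁻¹) :
    (∀ (σ : Γ) (x : Kt), x ∈ K' ∧ k⁻¹ * x * k ∈ K' →
        σ • x ∈ K' ∧ k⁻¹ * (σ • x) * k ∈ K') ∧
    {x : Kt | (∃ a ∈ K', ∃ b ∈ K', x = a * k * b) ∧ ∀ σ : Γ, σ • x = x} =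
      {x : Kt | ∃ a ∈ K', ∃ b ∈ K',
        (∀ σ : Γ, σ • a = a) ∧ (∀ σ : Γ, σ • b = b) ∧ x = a * k * b} := by
  refine ⟨?_, ?_⟩
  · rintro σ x ⟨h1, h2⟩
    refine ⟨hK' σ x h1, ?_⟩
    have h := hK' σ _ h2
    rwa [smul_mul', smul_mul', smul_inv', hk] at h
  · ext x
    constructor
    · rintro ⟨⟨a, ha, b, hb, hx⟩, hfix⟩
      have key : ∀ σ : Γ, k⁻¹ * (a⁻¹ * σ • a) * k = b * (σ • b)⁻¹ := by
        intro σ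
        have h := hfix σ
        rw [hx, smul_mul', smul_mul', hk] at h
        have h2 : (σ • a) * k = a * k * b * (σ • b)⁻¹ := by
          rw [← h]; group
        calc k⁻¹ * (a⁻¹ * σ • a) * k = k⁻¹ * a⁻¹ * ((σ • a) * k) := by group
          _ = b * (σ • b)⁻¹ := by rw [h2]; group
      obtain ⟨d, ⟨hd1, hd2⟩, hd⟩ := hcoc (fun σ => a⁻¹ * σ • a)
        (fun σ => ⟨K'.mul_mem (K'.inv_mem ha) (hK' σ a ha), by
          rw [key σ]
          exact K'.mul_mem hb (K'.inv_mem (hK' σ b hb))⟩)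
        (fun σ τ => by
          simp only [smul_mul', smul_inv', mul_smul]
          group)
      have hfa : ∀ σ : Γ, σ • (a * d) = a * d := by
        intro σ
        have h : a⁻¹ * σ • a = d * (σ • d)⁻¹ := hd σ
        have h2 : σ • a = a * (d * (σ • d)⁻¹) := by rw [← h]; group
        rw [smul_mul', h2]; group
      have hb' : (k⁻¹ * d * k)⁻¹ * b = k⁻¹ * (a * d)⁻¹ * x := by rw [hx]; group
      refine ⟨a * d, K'.mul_mem ha hd1, (k⁻¹ * d * k)⁻¹ * b,
        K'.mul_mem (K'.inv_mem hd2) hb, hfa, ?_, ?_⟩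
      · intro σ
        rw [hb', smul_mul', smul_mul', smul_inv', smul_inv', hk, hfa, hfix]
      · rw [hb']; group
    · rintro ⟨a, ha, b, hb, hfa, hfb, hx⟩
      refine ⟨⟨a, ha, b, hb, hx⟩, fun σ => ?_⟩
      rw [hx, smul_mul', smul_mul', hfa, hfb, hk]
end

section
/- Let Γ be a finite group acting by group automorphisms on a group K̃, let K̃' be a Γ-stable subgroup of K̃, and set K = K̃^Γ and K' = (K̃')^Γ. Let κ : K̃ → K̃ be an anti-involution (a bijection with κ(xy) = κ(y)κ(x) and κ∘κ = id) such that: (i) κ commutes with the action of every σ ∈ Γ; (ii) κ(K̃' x K̃') = K̃' x K̃' for every x ∈ K̃; (iii) for every k ∈ K, every 1-cocycle of Γ with values in k K̃' k⁻¹ ∩ K̃' is a coboundary. Then for every k ∈ K one has κ(k) ∈ K' k K'; in particular κ fixes every double coset K' k K' ⊆ K setwise. -/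
/-- Lemma 2.3: let a finite group `Γ` act by group automorphisms on a group `K̃`, `K'` a
`Γ`-stable subgroup, and `κ` an anti-involution of `K̃` commuting with the `Γ`-action and
fixing every double coset `K̃' x K̃'` setwise. If for every `Γ`-fixed `k` every 1-cocycle of
`Γ` valued in `k K̃' k⁻¹ ∩ K̃'` is a coboundary, then `κ(k) ∈ K' k K'` for every `Γ`-fixed
`k`, where `K' = (K̃')^Γ`; i.e. `κ` fixes every double coset `K' k K'` setwise. -/
theorem stmt_2 (Γ Kt : Type*) [Group Γ] [Finite Γ] [Group Kt]
    [MulDistribMulAction Γ Kt]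
    (K' : Subgroup Kt) (hK' : ∀ (σ : Γ) (x : Kt), x ∈ K' → σ • x ∈ K')
    (κ : Kt → Kt) (hbij : Function.Bijective κ)
    (hanti : ∀ x y : Kt, κ (x * y) = κ y * κ x) (hinvol : ∀ x : Kt, κ (κ x) = x)
    (hcomm : ∀ (σ : Γ) (x : Kt), κ (σ • x) = σ • κ x)
    (hstab : ∀ x : Kt, κ '' {z : Kt | ∃ a ∈ K', ∃ b ∈ K', z = a * x * b} =
        {z : Kt | ∃ a ∈ K', ∃ b ∈ K', z = a * x * b})
    (hcoc : ∀ k : Kt, (∀ σ : Γ, σ • k = k) → ∀ c : Γ → Kt,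
        (∀ σ, c σ ∈ K' ∧ k⁻¹ * c σ * k ∈ K') →
        (∀ σ τ, c (σ * τ) = c σ * σ • c τ) →
        ∃ b : Kt, (b ∈ K' ∧ k⁻¹ * b * k ∈ K') ∧ ∀ σ, c σ = b * (σ • b)⁻¹) :
    ∀ k : Kt, (∀ σ : Γ, σ • k = k) →
      ∃ a ∈ K', ∃ b ∈ K',
        (∀ σ : Γ, σ • a = a) ∧ (∀ σ : Γ, σ • b = b) ∧ κ k = a * k * b := by
  intro k hk
  have hmem : κ k ∈ {z : Kt | ∃ a ∈ K', ∃ b ∈ K', z = a * k * b} := by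
    rw [← hstab k]
    exact ⟨k, ⟨1, K'.one_mem, 1, K'.one_mem, by simp⟩, rfl⟩
  obtain ⟨a, ha, b, hb, hab⟩ := hmem
  have hκ : ∀ σ : Γ, σ • κ k = κ k := fun σ => by rw [← hcomm, hk]
  have key : ∀ σ : Γ, k⁻¹ * (a⁻¹ * σ • a) * k = b * (σ • b)⁻¹ := by
    intro σ
    have h := hκ σ
    rw [hab, smul_mul', smul_mul', hk] at h
    rw [eq_mul_inv_iff_mul_eq]
    calc k⁻¹ * (a⁻¹ * σ • a) * k * σ • b = k⁻¹ * a⁻¹ * (σ • a * k * σ • b) := by group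
      _ = b := by rw [h]; group
  obtain ⟨β, ⟨hβ, hβk⟩, hc⟩ := hcoc k hk (fun σ => a⁻¹ * σ • a)
    (fun σ => ⟨K'.mul_mem (K'.inv_mem ha) (hK' σ a ha), by
      rw [key σ]; exact K'.mul_mem hb (K'.inv_mem (hK' σ b hb))⟩)
    (fun σ τ => by simp only [smul_mul', smul_inv', mul_smul]; group)
  have hfix : ∀ σ : Γ, σ • (a * β) = a * β := by
    intro σ
    have h : a⁻¹ * σ • a = β * (σ • β)⁻¹ := hc σ
    rw [eq_mul_inv_iff_mul_eq] at h
    rw [smul_mul']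
    calc σ • a * σ • β = a * (a⁻¹ * σ • a * σ • β) := by group
      _ = a * β := by rw [h]
  have hb' : (k⁻¹ * β * k)⁻¹ * b = k⁻¹ * (a * β)⁻¹ * κ k := by rw [hab]; group
  refine ⟨a * β, K'.mul_mem ha hβ, (k⁻¹ * β * k)⁻¹ * b,
    K'.mul_mem (K'.inv_mem hβk) hb, hfix, ?_, ?_⟩
  · intro σ
    rw [hb', smul_mul', smul_mul', smul_inv', smul_inv', hfix, hk, hκ]
  · rw [hb']; group
end

section
/- Let k be a field of characteristic different from 2 and let α ∈ GL_n(k) be unipotent. Then α lies in the k-subalgebra of M_n(k) generated by α² (α is a polynomial in α²); in particular, any matrix x ∈ M_n(k) that commutes with α² also commutes with α. -/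
open Polynomial in
theorem stmt_4_aux {k A : Type*} [Field k] [Ring A] [Algebra k A] (h2 : (2 : k) ≠ 0)
    (N : A) (S : Subalgebra k A) (hS : N * (2 + N) ∈ S) (m : ℕ) (hm : N ^ m = 0) (i : ℕ) :
    ∀ j, j + i = m → ∀ p : k[X], aeval N (X ^ j * p) ∈ S := by
  induction i with
  | zero =>
    intro j hj p
    have : j = m := by omega
    subst this
    simp [hm, S.zero_mem]
  | succ i ih =>
    intro j hj p
    have hq : X ∣ p - (2 + X) ^ j * C (p.eval 0 / 2 ^ j) := by
      rw [X_dvd_iff, coeff_zero_eq_eval_zero]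
      have : (2 : k) ^ j ≠ 0 := pow_ne_zero _ h2
      simp only [eval_sub, eval_mul, eval_pow, eval_add, eval_ofNat, eval_X, eval_C, add_zero]
      field_simp
      ring
    obtain ⟨q, hq⟩ := hq
    have e : X ^ j * p = X ^ (j + 1) * q + (X * (2 + X)) ^ j * C (p.eval 0 / 2 ^ j) := by
      rw [mul_pow, pow_succ]
      linear_combination X ^ j * hq
    rw [e, map_add]
    refine S.add_mem (ih (j + 1) (by omega) q) ?_
    rw [map_mul, map_pow, map_mul, map_add, aeval_X, aeval_C, map_ofNat]
    exact S.mul_mem (S.pow_mem hS j) (S.algebraMap_mem _)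

/-- Over a field `k` of characteristic different from 2, a unipotent matrix `α` lies in the
`k`-subalgebra of `M_n(k)` generated by `α²`; in particular any matrix commuting with `α²`
commutes with `α`. -/
theorem stmt_4 (n : ℕ) (k : Type*) [Field k] (hchar : ringChar k ≠ 2)
    (α : Matrix (Fin n) (Fin n) k) (hα : IsNilpotent (α - 1)) :
    α ∈ Algebra.adjoin k {α ^ 2} ∧
    ∀ x : Matrix (Fin n) (Fin n) k, Commute x (α ^ 2) → Commute x α := by
  have h2 : (2 : k) ≠ 0 := Ring.two_ne_zero hchar
  have key : α ∈ Algebra.adjoin k {α ^ 2} := by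
    obtain ⟨m, hm⟩ := hα
    have hS : (α - 1) * (2 + (α - 1)) ∈ Algebra.adjoin k {α ^ 2} := by
      have : (α - 1) * (2 + (α - 1)) = α ^ 2 - 1 := by noncomm_ring
      rw [this]
      exact Subalgebra.sub_mem _ (Algebra.subset_adjoin rfl) (Subalgebra.one_mem _)
    have := stmt_4_aux h2 (α - 1) _ hS m hm m 0 (by omega) (Polynomial.X + 1)
    simpa using this
  refine ⟨key, fun x hx => ?_⟩
  have hle : Algebra.adjoin k {α ^ 2} ≤ Subalgebra.centralizer k {x} := by
    rw [Algebra.adjoin_le_iff]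
    rintro _ rfl
    rintro _ rfl
    exact hx.eq
  have := Subalgebra.mem_centralizer_iff k |>.1 (hle key) x rfl
  exact this
end

section
/- With the notation of the setup, one has H · U_S · H = { g ∈ G : ρ(g) ∈ U_S }; moreover every double coset H g H contained in this set is stable under inversion, i.e. g⁻¹ ∈ H g H for every g ∈ G with ρ(g) ∈ U_S. -/
noncomputable section

/-- The block matrix `g(α,β) = [[α, β], [β̄, ᾱ]]`, where `x ↦ x̄` is given by `σ`. -/
def gmat {E : Type*} [Field E] {n : ℕ} (σ : E → E) (α β : Matrix (Fin n) (Fin n) E) :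
    Matrix (Fin n ⊕ Fin n) (Fin n ⊕ Fin n) E :=
  Matrix.fromBlocks α β (β.map σ) (α.map σ)

/-- The group `G` of invertible matrices of the form `g(α,β)`. -/
def GuoG (E : Type*) [Field E] (n : ℕ) (σ : E → E) :
    Set (Matrix (Fin n ⊕ Fin n) (Fin n ⊕ Fin n) E) :=
  {g | (∃ α β : Matrix (Fin n) (Fin n) E, g = gmat σ α β) ∧ IsUnit g}

/-- The subgroup `H` of elements `g(α,0)` of `G`. -/
def GuoH (E : Type*) [Field E] (n : ℕ) (σ : E → E) :
    Set (Matrix (Fin n ⊕ Fin n) (Fin n ⊕ Fin n) E) :=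
  {g | (∃ α : Matrix (Fin n) (Fin n) E, g = gmat σ α 0) ∧ IsUnit g}

/-- The element `ε = δ·diag(I_n, -I_n)`. -/
def Guoeps (E : Type*) [Field E] (n : ℕ) (δ : E) :
    Matrix (Fin n ⊕ Fin n) (Fin n ⊕ Fin n) E :=
  δ • Matrix.fromBlocks 1 0 0 (-1)

/-- The symmetric space `S = {s ∈ G | ε s ε⁻¹ = s⁻¹}`. -/
def GuoS (E : Type*) [Field E] (n : ℕ) (σ : E → E) (δ : E) :
    Set (Matrix (Fin n ⊕ Fin n) (Fin n ⊕ Fin n) E) :=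
  {s | s ∈ GuoG E n σ ∧ Guoeps E n δ * s * (Guoeps E n δ)⁻¹ = s⁻¹}

/-- The map `ρ : g ↦ g ε g⁻¹ ε⁻¹`. -/
def Guorho (E : Type*) [Field E] (n : ℕ) (δ : E)
    (g : Matrix (Fin n ⊕ Fin n) (Fin n ⊕ Fin n) E) :
    Matrix (Fin n ⊕ Fin n) (Fin n ⊕ Fin n) E :=
  g * Guoeps E n δ * g⁻¹ * (Guoeps E n δ)⁻¹

/-- The set `U` of unipotent elements of `G`. -/
def GuoU (E : Type*) [Field E] (n : ℕ) (σ : E → E) :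
    Set (Matrix (Fin n ⊕ Fin n) (Fin n ⊕ Fin n) E) :=
  {g | g ∈ GuoG E n σ ∧ IsNilpotent (g - 1)}

/-- The set `U_S = U ∩ S`. -/
def GuoUS (E : Type*) [Field E] (n : ℕ) (σ : E → E) (δ : E) :
    Set (Matrix (Fin n ⊕ Fin n) (Fin n ⊕ Fin n) E) :=
  GuoU E n σ ∩ GuoS E n σ δ


/-- Unipotent square roots in a commutative ring where `2` is invertible. -/
theorem sqrt_comm {R : Type*} [CommRing R] (h2 : IsUnit (2 : R)) (s : R)
    (hs : IsNilpotent (s - 1)) : ∃ r : R, r * r = s ∧ IsNilpotent (r - 1) := by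
  have h := Polynomial.existsUnique_nilpotent_sub_and_aeval_eq_zero (R := R) (S := R)
    (P := Polynomial.X ^ 2 - Polynomial.C s) (x := 1)
    (by
      have : IsNilpotent (-(s - 1)) := hs.neg
      simpa using this)
    (by simpa [one_add_one_eq_two] using h2)
  obtain ⟨r, ⟨h1, h3⟩, -⟩ := h
  refine ⟨r, ?_, ?_⟩
  · have h4 : r ^ 2 - s = 0 := by simpa using h3
    linear_combination h4
  · have := h1.neg
    simpa using this

/-- Unipotent square roots inside the algebra generated by an element. -/
theorem sqrt_adjoin {F M : Type*} [Field F] [Ring M] [Algebra F M] (h2 : (2 : F) ≠ 0) (s : M)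
    (hs : IsNilpotent (s - 1)) :
    ∃ r ∈ Algebra.adjoin F {s}, r * r = s ∧ IsNilpotent (r - 1) := by
  have hu : IsUnit (2 : Algebra.adjoin F {s}) := by
    have := (IsUnit.mk0 _ h2).map (algebraMap F (Algebra.adjoin F {s}))
    rwa [map_ofNat] at this
  obtain ⟨r, hr, hn⟩ := sqrt_comm hu ⟨s, Algebra.self_mem_adjoin_singleton F s⟩ (by
    obtain ⟨k, hk⟩ := hs
    exact ⟨k, Subtype.ext (by simpa using hk)⟩)
  refine ⟨r, r.2, ?_, ?_⟩
  · simpa using congrArg Subtype.val hr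
  · obtain ⟨k, hk⟩ := hn
    exact ⟨k, by simpa using congrArg Subtype.val hk⟩

/-- A commuting product of unipotents is unipotent. -/
theorem unip_mul {M : Type*} [Ring M] {x y : M} (hc : Commute x y)
    (hx : IsNilpotent (x - 1)) (hy : IsNilpotent (y - 1)) : IsNilpotent (x * y - 1) := by
  have e : x * y - 1 = (x - 1) * y + (y - 1) := by noncomm_ring
  have c1 : Commute (x - 1) y := hc.sub_left (Commute.one_left y)
  rw [e]
  refine Commute.isNilpotent_add ?_ (c1.isNilpotent_mul_right hx) hy
  exact ((c1.mul_left (Commute.refl y)).sub_right (Commute.one_right _))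

/-- A unipotent involution is trivial. -/
theorem unip_invol {M : Type*} [Ring M] (h2 : IsUnit (2 : M)) {x : M}
    (hx : IsNilpotent (x - 1)) (hxx : x * x = 1) : x = 1 := by
  have hu : IsUnit ((x - 1) + 2) :=
    hx.isUnit_add_right_of_commute h2 (by
      have : Commute (x - 1) ((2 : ℕ) : M) := Nat.commute_cast _ _
      simpa using this)
  have : ((x - 1) + 2) * (x - 1) = 0 := by
    have e : ((x - 1) + 2) * (x - 1) = x * x - 1 := by
      rw [← one_add_one_eq_two]; noncomm_ring
    rw [e, hxx, sub_self]
  exact sub_eq_zero.mp ((hu.mul_right_eq_zero).mp this)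

/-- Nilpotency is invariant under conjugation. -/
theorem unip_conj {M : Type*} [Ring M] {e e' x : M} (h' : e' * e = 1) (h : e * e' = 1)
    (hx : IsNilpotent (x - 1)) : IsNilpotent (e * x * e' - 1) := by
  have key : ∀ k : ℕ, (e * x * e' - 1) ^ k = e * (x - 1) ^ k * e' := by
    intro k
    induction k with
    | zero => simp [h]
    | succ k ih =>
      have e1 : e * x * e' - 1 = e * (x - 1) * e' := by
        rw [mul_sub, sub_mul, mul_one, h]
      rw [pow_succ, ih, e1, pow_succ]
      calc e * (x - 1) ^ k * e' * (e * (x - 1) * e')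
          = e * (x - 1) ^ k * (e' * e) * (x - 1) * e' := by noncomm_ring
        _ = _ := by rw [h']; noncomm_ring
  obtain ⟨k, hk⟩ := hx
  exact ⟨k, by rw [key, hk]; simp⟩

/-- The symmetric unipotent square root. -/
theorem sqrt_symm {F M : Type*} [Field F] [Ring M] [Algebra F M] (h2 : (2 : F) ≠ 0) {s e e' : M}
    (h' : e' * e = 1) (h : e * e' = 1)
    (hs : IsNilpotent (s - 1)) (h1 : (e * s * e') * s = 1) (h3 : s * (e * s * e') = 1) :
    ∃ r ∈ Algebra.adjoin F {s}, r * r = s ∧ IsNilpotent (r - 1) ∧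
      (e * r * e') * r = 1 ∧ r * (e * r * e') = 1 := by
  obtain ⟨r, hr, hrr, hn⟩ := sqrt_adjoin h2 s hs
  have hcs : Commute s (e' * s * e) := by
    have a1 : s * (e' * s * e) = 1 := by
      calc s * (e' * s * e) = (e' * e) * s * (e' * s * e) := by rw [h', one_mul]
        _ = e' * ((e * s * e') * s) * e := by noncomm_ring
        _ = 1 := by rw [h1, mul_one, h']
    have a2 : (e' * s * e) * s = 1 := by
      calc (e' * s * e) * s = (e' * s * e) * s * (e' * e) := by rw [h', mul_one]
        _ = e' * (s * (e * s * e')) * e := by noncomm_ring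
        _ = 1 := by rw [h3, mul_one, h']
    exact a1.trans a2.symm
  have c1 : Commute (e' * s * e) r :=
    Algebra.commute_of_mem_adjoin_singleton_of_commute hr hcs.symm
  have c2 : Commute (e * r * e') s := by
    have c3 : e' * s * e * r = r * (e' * s * e) := c1
    show e * r * e' * s = s * (e * r * e')
    calc e * r * e' * s = e * r * e' * s * (e * e') := by rw [h, mul_one]
      _ = e * (r * (e' * s * e)) * e' := by noncomm_ring
      _ = e * (e' * s * e * r) * e' := by rw [c3]
      _ = (e * e') * s * (e * r * e') := by noncomm_ring
      _ = _ := by rw [h, one_mul]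
  have c4 : Commute (e * r * e') r := Algebra.commute_of_mem_adjoin_singleton_of_commute hr c2
  have hu : IsUnit (2 : M) := by
    have := (IsUnit.mk0 _ h2).map (algebraMap F M)
    rwa [map_ofNat] at this
  have hfin : (e * r * e') * r = 1 := by
    refine unip_invol hu (unip_mul c4 (unip_conj h' h hn) hn) ?_
    calc e * r * e' * r * (e * r * e' * r) = e * r * e' * (r * (e * r * e')) * r := by noncomm_ring
      _ = e * r * e' * ((e * r * e') * r) * r := by rw [c4.eq]
      _ = e * r * (e' * e) * r * e' * (r * r) := by noncomm_ring
      _ = e * (r * r) * e' * (r * r) := by rw [h']; noncomm_ring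
      _ = 1 := by rw [hrr, h1]
  exact ⟨r, hr, hrr, hn, hfin, by rw [← c4.eq]; exact hfin⟩

/-- The semilinear involution whose fixed points are the matrices `g(α,β)`. -/
def tauHom {F E : Type*} [Field F] [Field E] [Algebra F E] (n : ℕ) (σ : E ≃ₐ[F] E) :
    Matrix (Fin n ⊕ Fin n) (Fin n ⊕ Fin n) E →ₐ[F] Matrix (Fin n ⊕ Fin n) (Fin n ⊕ Fin n) E :=
  ((Matrix.reindexAlgEquiv F E (Equiv.sumComm (Fin n) (Fin n))).toAlgHom).comp
    (σ.mapMatrix (m := Fin n ⊕ Fin n)).toAlgHom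

theorem tauHom_fromBlocks {F E : Type*} [Field F] [Field E] [Algebra F E] (n : ℕ) (σ : E ≃ₐ[F] E)
    (a b c d : Matrix (Fin n) (Fin n) E) :
    tauHom n σ (Matrix.fromBlocks a b c d) =
      Matrix.fromBlocks (d.map σ) (c.map σ) (b.map σ) (a.map σ) := by
  ext (i | i) (j | j) <;> simp [tauHom]

theorem tau_iff {F E : Type*} [Field F] [Field E] [Algebra F E] (n : ℕ) (σ : E ≃ₐ[F] E)
    (hσinv : ∀ x : E, σ (σ x) = x) (g : Matrix (Fin n ⊕ Fin n) (Fin n ⊕ Fin n) E) :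
    (∃ α β : Matrix (Fin n) (Fin n) E, g = gmat (⇑σ) α β) ↔ tauHom n σ g = g := by
  constructor
  · rintro ⟨α, β, rfl⟩
    rw [gmat, tauHom_fromBlocks]
    congr 1 <;> ext i j <;> simp [hσinv]
  · intro h
    refine ⟨g.toBlocks₁₁, g.toBlocks₁₂, ?_⟩
    rw [← Matrix.fromBlocks_toBlocks g, tauHom_fromBlocks, Matrix.fromBlocks_inj] at h
    conv_lhs => rw [← Matrix.fromBlocks_toBlocks g]
    rw [gmat, h.2.2.1, h.2.2.2]

theorem memG_iff {F E : Type*} [Field F] [Field E] [Algebra F E] (n : ℕ) (σ : E ≃ₐ[F] E)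
    (hσinv : ∀ x : E, σ (σ x) = x) (g : Matrix (Fin n ⊕ Fin n) (Fin n ⊕ Fin n) E) :
    g ∈ GuoG E n (⇑σ) ↔ tauHom n σ g = g ∧ IsUnit g := by
  rw [← tau_iff n σ hσinv]; rfl

theorem memH_iff {F E : Type*} [Field F] [Field E] [Algebra F E] (n : ℕ) (σ : E ≃ₐ[F] E)
    (hσinv : ∀ x : E, σ (σ x) = x) (h2 : (2 : E) ≠ 0) (δ : E) (hδ0 : δ ≠ 0)
    (g : Matrix (Fin n ⊕ Fin n) (Fin n ⊕ Fin n) E) :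
    g ∈ GuoH E n (⇑σ) ↔ tauHom n σ g = g ∧ IsUnit g ∧ Commute (Guoeps E n δ) g := by
  constructor
  · rintro ⟨⟨α, rfl⟩, hu⟩
    refine ⟨(tau_iff n σ hσinv _).mp ⟨α, 0, rfl⟩, hu, ?_⟩
    show _ * _ = _ * _
    simp [Guoeps, gmat, Matrix.fromBlocks_multiply, Matrix.map_zero]
  · rintro ⟨h1, hu, hc⟩
    obtain ⟨α, β, rfl⟩ := (tau_iff n σ hσinv _).mpr h1
    have hb : β = 0 := by
      have hc' : _ * _ = _ * _ := hc
      simp only [Guoeps, gmat, Matrix.smul_mul, Matrix.mul_smul, Matrix.fromBlocks_multiply] at hc'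
      have hc2 := smul_right_injective _ hδ0 hc'
      rw [Matrix.fromBlocks_inj] at hc2
      have h3 := hc2.2.1
      simp only [one_mul, mul_zero, zero_mul, add_zero, zero_add, mul_neg, mul_one] at h3
      have h4 : (2 : E) • β = 0 := by
        rw [two_smul]; nth_rewrite 1 [h3]; simp
      exact (smul_eq_zero.mp h4).resolve_left h2
    subst hb
    exact ⟨⟨α, rfl⟩, hu⟩

theorem tau_inv {F M : Type*} [Field F] [Ring M] [Algebra F M] (τ : M →ₐ[F] M) {x y : M}
    (hx : τ x = x) (h1 : x * y = 1) (h2 : y * x = 1) : τ y = y := by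
  have h3 : x * τ y = 1 := by rw [← hx, ← map_mul, h1, map_one]
  calc τ y = y * x * τ y := by rw [h2, one_mul]
    _ = y := by rw [mul_assoc, h3, mul_one]

theorem sigma_delta {F E : Type*} [Field F] [Field E] [Algebra F E]
    (σ : E ≃ₐ[F] E) (hσne : σ ≠ AlgEquiv.refl)
    (δ : E) (hδ2 : ∃ c : F, algebraMap F E c = δ ^ 2)
    (hδgen : Algebra.adjoin F {δ} = ⊤) : σ δ = -δ := by
  obtain ⟨c, hc⟩ := hδ2
  have h : (σ δ) ^ 2 = δ ^ 2 := by rw [← map_pow, ← hc, σ.commutes]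
  rcases sq_eq_sq_iff_eq_or_eq_neg.mp h with h | h
  · exfalso
    apply hσne
    have : (σ : E →ₐ[F] E) = AlgHom.id F E :=
      AlgHom.ext_of_adjoin_eq_top hδgen (by
        intro x hx
        rw [Set.mem_singleton_iff] at hx
        subst hx
        exact h)
    ext x
    exact DFunLike.congr_fun this x
  · exact h

/-- Guo's Lemma 3.2 (2), in characteristic different from 2: one has
`H U_S H = {g ∈ G : ρ(g) ∈ U_S}`, and every double coset `H g H` contained in this set is
stable under inversion, i.e. `g⁻¹ ∈ H g H` whenever `ρ(g) ∈ U_S`. -/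
theorem stmt_7 (n : ℕ) (F E : Type*) [Field F] [Field E] [Algebra F E]
    (hchar : ringChar F ≠ 2) (hdim : Module.finrank F E = 2)
    (σ : E ≃ₐ[F] E) (hσinv : ∀ x : E, σ (σ x) = x) (hσne : σ ≠ AlgEquiv.refl)
    (δ : E) (hδ0 : δ ≠ 0) (hδ2 : ∃ c : F, algebraMap F E c = δ ^ 2)
    (hδgen : Algebra.adjoin F {δ} = ⊤) :
    {x : Matrix (Fin n ⊕ Fin n) (Fin n ⊕ Fin n) E |
        ∃ h₁ ∈ GuoH E n (⇑σ), ∃ u ∈ GuoUS E n (⇑σ) δ, ∃ h₂ ∈ GuoH E n (⇑σ),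
          x = h₁ * u * h₂} =
      {g : Matrix (Fin n ⊕ Fin n) (Fin n ⊕ Fin n) E |
        g ∈ GuoG E n (⇑σ) ∧ Guorho E n δ g ∈ GuoUS E n (⇑σ) δ} ∧
    ∀ g ∈ GuoG E n (⇑σ), Guorho E n δ g ∈ GuoUS E n (⇑σ) δ →
      ∃ h₁ ∈ GuoH E n (⇑σ), ∃ h₂ ∈ GuoH E n (⇑σ), g⁻¹ = h₁ * g * h₂ := by
  have h2F : (2 : F) ≠ 0 := Ring.two_ne_zero hchar
  have h2E : (2 : E) ≠ 0 := by
    have := (map_ne_zero (algebraMap F E)).mpr h2F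
    rwa [map_ofNat] at this
  have hσδ := sigma_delta σ hσne δ hδ2 hδgen
  have hHiff := memH_iff n σ hσinv h2E δ hδ0
  have hGiff := memG_iff n σ hσinv
  set τ := tauHom n σ with hτ
  set e := Guoeps E n δ with he
  have heu : IsUnit e := by
    refine IsUnit.of_mul_eq_one (δ⁻¹ • Matrix.fromBlocks 1 0 0 (-1)) ?_
    rw [he, Guoeps]
    simp [Matrix.fromBlocks_multiply, smul_smul, hδ0, Matrix.fromBlocks_one]
  have hτe : τ e = e := by
    rw [he, Guoeps, Matrix.fromBlocks_smul, hτ, tauHom_fromBlocks]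
    congr 1 <;> ext i j <;> by_cases hij : i = j <;> simp [Matrix.map_apply, hσδ, hij]
  have hinv : ∀ x : Matrix (Fin n ⊕ Fin n) (Fin n ⊕ Fin n) E, IsUnit x →
      x * x⁻¹ = 1 ∧ x⁻¹ * x = 1 := fun x hx =>
    ⟨Matrix.mul_nonsing_inv x ((Matrix.isUnit_iff_isUnit_det x).mp hx),
      Matrix.nonsing_inv_mul x ((Matrix.isUnit_iff_isUnit_det x).mp hx)⟩
  obtain ⟨ee, einv_mul⟩ := hinv e heu
  have hτinv : ∀ x, IsUnit x → τ x = x → τ x⁻¹ = x⁻¹ := fun x hx h =>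
    tau_inv τ h (hinv x hx).1 (hinv x hx).2
  have hinvu : ∀ x : Matrix (Fin n ⊕ Fin n) (Fin n ⊕ Fin n) E, IsUnit x → IsUnit x⁻¹ :=
    fun x hx => IsUnit.of_mul_eq_one x (hinv x hx).2
  have hHinv : ∀ x ∈ GuoH E n (⇑σ), x⁻¹ ∈ GuoH E n (⇑σ) := by
    intro x hx
    rw [hHiff] at hx ⊢
    obtain ⟨a, b, c⟩ := hx
    refine ⟨hτinv x b a, hinvu x b, ?_⟩
    obtain ⟨i1, i2⟩ := hinv x b
    show e * x⁻¹ = x⁻¹ * e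
    calc e * x⁻¹ = x⁻¹ * (x * e) * x⁻¹ := by rw [← mul_assoc, i2, one_mul]
      _ = x⁻¹ * (e * x) * x⁻¹ := by rw [c.eq]
      _ = x⁻¹ * e * (x * x⁻¹) := by simp only [mul_assoc]
      _ = _ := by rw [i1, mul_one]
  have hHmul : ∀ x ∈ GuoH E n (⇑σ), ∀ y ∈ GuoH E n (⇑σ), x * y ∈ GuoH E n (⇑σ) := by
    intro x hx y hy
    rw [hHiff] at hx hy ⊢
    exact ⟨by rw [map_mul, hx.1, hy.1], hx.2.1.mul hy.2.1, hx.2.2.mul_right hy.2.2⟩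
  have heH : e ∈ GuoH E n (⇑σ) := (hHiff e).mpr ⟨hτe, heu, Commute.refl e⟩
  have h1H : (1 : Matrix (Fin n ⊕ Fin n) (Fin n ⊕ Fin n) E) ∈ GuoH E n (⇑σ) :=
    (hHiff 1).mpr ⟨map_one τ, isUnit_one, Commute.one_right e⟩
  -- the main decomposition
  have main : ∀ g ∈ GuoG E n (⇑σ), Guorho E n δ g ∈ GuoUS E n (⇑σ) δ →
      ∃ u ∈ GuoUS E n (⇑σ) δ, ∃ h ∈ GuoH E n (⇑σ), g = u * h := by
    rintro g hg ⟨⟨hsG, hsn⟩, -, hsS⟩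
    rw [hGiff] at hg hsG
    obtain ⟨hgτ, hgu⟩ := hg
    obtain ⟨g1, g2⟩ := hinv g hgu
    set s := Guorho E n δ g with hs
    obtain ⟨s1, s2⟩ := hinv s hsG.2
    rw [← he] at hsS
    obtain ⟨u, hu, huu, hun, hu1, hu2⟩ := sqrt_symm h2F einv_mul ee hsn
      (by rw [hsS, s2]) (by rw [hsS, s1])
    have huτ : τ u = u := by
      have hle : Algebra.adjoin F {s} ≤ AlgHom.equalizer τ (AlgHom.id F _) := by
        rw [Algebra.adjoin_le_iff, Set.singleton_subset_iff]
        exact hsG.1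
      exact hle hu
    have huU : IsUnit u := ⟨⟨u, e * u * e⁻¹, hu2, hu1⟩, rfl⟩
    have huinv : u⁻¹ = e * u * e⁻¹ := Matrix.inv_eq_right_inv hu2
    have huG : u ∈ GuoG E n (⇑σ) := (hGiff u).mpr ⟨huτ, huU⟩
    refine ⟨u, ⟨⟨huG, hun⟩, huG, ?_⟩, u⁻¹ * g, ?_, ?_⟩
    · rw [huinv]
    · rw [hHiff]
      refine ⟨by rw [map_mul, hτinv u huU huτ, hgτ], (hinvu u huU).mul hgu, ?_⟩
      obtain ⟨i1, i2⟩ := hinv u huU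
      have hse : s * e * g = g * e := by
        rw [hs, Guorho, ← he]
        calc g * e * g⁻¹ * e⁻¹ * e * g = g * e * g⁻¹ * (e⁻¹ * e) * g := by simp only [mul_assoc]
          _ = g * e * (g⁻¹ * g) := by rw [einv_mul]; simp only [mul_assoc, one_mul]
          _ = _ := by rw [g2, mul_one]
      have hue : u * (e * u) = e := by
        calc u * (e * u) = u * (e * u * e⁻¹) * e := by
              rw [mul_assoc u, mul_assoc (e * u), einv_mul, mul_one]
          _ = e := by rw [hu2, one_mul]
      have hue' : e * u⁻¹ = u * e := by
        calc e * u⁻¹ = u * (e * u) * u⁻¹ := by rw [hue]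
          _ = u * e * (u * u⁻¹) := by simp only [mul_assoc]
          _ = _ := by rw [i1, mul_one]
      show e * (u⁻¹ * g) = u⁻¹ * g * e
      calc e * (u⁻¹ * g) = u * e * g := by rw [← mul_assoc, hue']
        _ = (u⁻¹ * u) * (u * e * g) := by rw [i2, one_mul]
        _ = u⁻¹ * ((u * u) * e * g) := by simp only [mul_assoc]
        _ = _ := by rw [huu, hse, mul_assoc]
    · rw [← mul_assoc, (hinv u huU).1, one_mul]
  refine ⟨?_, ?_⟩
  · ext g
    constructor
    · rintro ⟨h₁, hh₁, u, ⟨⟨huG, hun⟩, -, huS⟩, h₂, hh₂, rfl⟩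
      rw [hHiff] at hh₁ hh₂
      rw [hGiff] at huG
      rw [← he] at huS
      obtain ⟨a1, a2, a3⟩ := hh₁
      obtain ⟨b1, b2, b3⟩ := hh₂
      obtain ⟨c1, c2⟩ := huG
      obtain ⟨p1, p2⟩ := hinv h₁ a2
      obtain ⟨q1, q2⟩ := hinv h₂ b2
      obtain ⟨r1, r2⟩ := hinv u c2
      have hgu : IsUnit (h₁ * u * h₂) := (a2.mul c2).mul b2
      have hgτ : τ (h₁ * u * h₂) = h₁ * u * h₂ := by rw [map_mul, map_mul, a1, b1, c1]
      have hue : e * u⁻¹ = u * e := by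
        have : e * u = u⁻¹ * e := by rw [← huS, mul_assoc _ _ e, einv_mul, mul_one]
        calc e * u⁻¹ = u * (u⁻¹ * e) * u⁻¹ := by rw [← mul_assoc, r1, one_mul]
          _ = u * e * (u * u⁻¹) := by rw [← this]; simp only [mul_assoc]
          _ = _ := by rw [r1, mul_one]
      have a3' : e * h₁⁻¹ = h₁⁻¹ * e :=
        (((hHiff _).mp (hHinv h₁ ((hHiff _).mpr ⟨a1, a2, a3⟩))).2.2).eq
      have hrho : Guorho E n δ (h₁ * u * h₂) = h₁ * (u * u) * h₁⁻¹ := by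
        rw [Guorho, ← he, Matrix.mul_inv_rev, Matrix.mul_inv_rev]
        calc h₁ * u * h₂ * e * (h₂⁻¹ * (u⁻¹ * h₁⁻¹)) * e⁻¹
            = h₁ * u * (h₂ * e) * (h₂⁻¹ * (u⁻¹ * h₁⁻¹)) * e⁻¹ := by simp only [mul_assoc]
          _ = h₁ * u * e * (h₂ * h₂⁻¹) * u⁻¹ * h₁⁻¹ * e⁻¹ := by
              rw [← b3.eq]; simp only [mul_assoc]
          _ = h₁ * u * (e * u⁻¹) * h₁⁻¹ * e⁻¹ := by rw [q1, mul_one]; simp only [mul_assoc]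
          _ = h₁ * u * u * (e * h₁⁻¹) * e⁻¹ := by rw [hue]; simp only [mul_assoc]
          _ = h₁ * (u * u) * h₁⁻¹ * (e * e⁻¹) := by rw [a3']; simp only [mul_assoc]
          _ = _ := by rw [ee, mul_one]
      have hsG : h₁ * (u * u) * h₁⁻¹ ∈ GuoG E n (⇑σ) := by
        rw [hGiff]
        exact ⟨by simp only [map_mul, a1, c1, hτinv h₁ a2 a1], (a2.mul (c2.mul c2)).mul (hinvu _ a2)⟩
      refine ⟨(hGiff _).mpr ⟨hgτ, hgu⟩, ?_⟩
      rw [hrho]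
      refine ⟨⟨hsG, unip_conj p2 p1 (unip_mul (Commute.refl u) hun hun)⟩, hsG, ?_⟩
      rw [← he]
      symm
      apply Matrix.inv_eq_right_inv
      have hue2 : u * e * u = e := by
        rw [← hue, mul_assoc, r2, mul_one]
      calc h₁ * (u * u) * h₁⁻¹ * (e * (h₁ * (u * u) * h₁⁻¹) * e⁻¹)
          = h₁ * (u * u) * h₁⁻¹ * (e * h₁) * (u * u) * h₁⁻¹ * e⁻¹ := by simp only [mul_assoc]
        _ = h₁ * (u * u) * (h₁⁻¹ * h₁) * e * (u * u) * h₁⁻¹ * e⁻¹ := by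
            rw [a3.eq]; simp only [mul_assoc]
        _ = h₁ * u * (u * e * u) * u * h₁⁻¹ * e⁻¹ := by
            rw [p2, mul_one]; simp only [mul_assoc]
        _ = h₁ * (u * e * u) * h₁⁻¹ * e⁻¹ := by
            conv_lhs => rw [hue2]
            simp only [mul_assoc]
        _ = h₁ * (e * h₁⁻¹) * e⁻¹ := by rw [hue2]; simp only [mul_assoc]
        _ = (h₁ * h₁⁻¹) * (e * e⁻¹) := by rw [a3']; simp only [mul_assoc]
        _ = 1 := by rw [p1, ee, mul_one]
    · rintro ⟨hg, hr⟩
      obtain ⟨u, hu, h, hh, rfl⟩ := main g hg hr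
      exact ⟨1, h1H, u, hu, h, hh, by rw [one_mul]⟩
  · intro g hg hr
    obtain ⟨u, hu, h, hh, rfl⟩ := main g hg hr
    have huS := hu.2.2
    rw [← he] at huS
    have i1 := (hinv h ((hHiff h).mp hh).2.1).1
    refine ⟨h⁻¹ * e, hHmul _ (hHinv h hh) _ heH, h⁻¹ * e⁻¹, hHmul _ (hHinv h hh) _ (hHinv e heH), ?_⟩
    rw [Matrix.mul_inv_rev, ← huS]
    calc h⁻¹ * (e * u * e⁻¹) = h⁻¹ * e * u * (1 * e⁻¹) := by rw [one_mul]; simp only [mul_assoc]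
      _ = _ := by rw [← i1]; simp only [mul_assoc]
end
end

section
/- With the notation of the setup, if g(α,β) ∈ U_S, then α ∈ GL_n(E) is unipotent and β·β̄ ∈ M_n(E) is nilpotent. -/
noncomputable section

/-- Guo's Lemma 3.2 (3), valid in characteristic different from 2: if `g(α,β) ∈ U_S`, then
`α` is unipotent and `β β̄` is nilpotent. -/
theorem stmt_9 (n : ℕ) (F E : Type*) [Field F] [Field E] [Algebra F E]
    (hchar : ringChar F ≠ 2) (hdim : Module.finrank F E = 2)
    (σ : E ≃ₐ[F] E) (hσinv : ∀ x : E, σ (σ x) = x) (hσne : σ ≠ AlgEquiv.refl)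
    (δ : E) (hδ0 : δ ≠ 0) (hδ2 : ∃ c : F, algebraMap F E c = δ ^ 2)
    (hδgen : Algebra.adjoin F {δ} = ⊤)
    (α β : Matrix (Fin n) (Fin n) E) (hu : gmat (⇑σ) α β ∈ GuoUS E n (⇑σ) δ) :
    IsNilpotent (α - 1) ∧ IsNilpotent (β * β.map σ) := by
  obtain ⟨⟨⟨-, hunit⟩, hnil⟩, -, hS⟩ := hu
  have h2 : (2 : E) ≠ 0 := by
    intro h
    apply Ring.two_ne_zero hchar
    apply (algebraMap F E).injective
    rw [map_ofNat, map_zero, h]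
  set b : Matrix (Fin n) (Fin n) E := β.map σ with hb
  set a : Matrix (Fin n) (Fin n) E := α.map σ with ha
  have hs : gmat (⇑σ) α β = Matrix.fromBlocks α β b a := rfl
  rw [hs] at hunit hnil hS
  set s := Matrix.fromBlocks α β b a with hsdef
  set t := Matrix.fromBlocks α (-β) (-b) a with ht
  have hee : Guoeps E n δ * ((δ ^ 2)⁻¹ • Guoeps E n δ) = 1 := by
    simp only [Guoeps, Matrix.mul_smul, Matrix.smul_mul, Matrix.fromBlocks_multiply, smul_smul]
    have : (δ ^ 2)⁻¹ * δ * δ = 1 := by field_simp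
    rw [this]
    simp
  have hes : Guoeps E n δ * s = t * Guoeps E n δ := by
    simp [Guoeps, hsdef, ht, Matrix.fromBlocks_multiply]
  rw [Matrix.inv_eq_right_inv hee, hes, Matrix.mul_assoc, hee, Matrix.mul_one] at hS
  have hdet : IsUnit s.det := (Matrix.isUnit_iff_isUnit_det s).1 hunit
  have hst : s * t = 1 := by rw [hS]; exact Matrix.mul_nonsing_inv s hdet
  have hts : t * s = 1 := by rw [hS]; exact Matrix.nonsing_inv_mul s hdet
  have key : t * (s - 1) ^ 2 = Matrix.fromBlocks ((2 : E) • (α - 1)) 0 0 ((2 : E) • (a - 1)) := by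
    have h1 : t * (s - 1) ^ 2 = (t * s) * s - 2 • (t * s) + t := by noncomm_ring
    rw [h1, hts, Matrix.one_mul, hsdef, ht, ← Matrix.fromBlocks_one, Matrix.fromBlocks_smul,
      sub_eq_add_neg, Matrix.fromBlocks_neg, Matrix.fromBlocks_add, Matrix.fromBlocks_add]
    congr 1
    · rw [two_smul, two_smul]; abel
    · simp
    · simp
    · rw [two_smul, two_smul]; abel
  have hcomm : Commute t (s - 1) := by
    change t * (s - 1) = (s - 1) * t
    rw [mul_sub, sub_mul, hst, hts, mul_one, one_mul]
  have hN : IsNilpotent (t * (s - 1) ^ 2) :=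
    (hcomm.pow_right 2).isNilpotent_mul_left (hnil.pow_of_pos two_ne_zero)
  have hA : IsNilpotent (α - 1) := by
    obtain ⟨k, hk⟩ := hN
    rw [key, Matrix.fromBlocks_diagonal_pow, ← Matrix.fromBlocks_zero, Matrix.fromBlocks_inj,
      smul_pow] at hk
    exact ⟨k, (smul_eq_zero.1 hk.1).resolve_left (pow_ne_zero k h2)⟩
  refine ⟨hA, ?_⟩
  have hbb : β * b = (α - 1) * (α + 1) := by
    rw [hsdef, ht, Matrix.fromBlocks_multiply, ← Matrix.fromBlocks_one, Matrix.fromBlocks_inj] at hst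
    have h := hst.1
    rw [mul_neg, ← sub_eq_add_neg, sub_eq_iff_eq_add] at h
    have h3 : (α - 1) * (α + 1) = α * α - 1 := by noncomm_ring
    rw [h3, h]; abel
  rw [hbb]
  have hc : Commute (α - 1) (α + 1) := by
    change (α - 1) * (α + 1) = (α + 1) * (α - 1)
    noncomm_ring
  exact hc.isNilpotent_mul_right hA
end
end

section
/- Let E/F be a quadratic extension of fields of characteristic different from 2, with nontrivial F-automorphism x ↦ x̄ of E applied entrywise to matrices. If β ∈ M_n(E) is such that β·β̄ is nilpotent, then there exists g ∈ GL_n(E) such that g β ḡ⁻¹ has all of its entries in F (equivalently, g β ḡ⁻¹ is fixed by entrywise conjugation). -/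
/-- One step of the Jordan chain construction: extend an adapted basis of `T R` to one of `R`. -/
theorem jordan_step {E V : Type*} [Field E] [AddCommGroup V] [Module E V] (σ τ : E →+* E)
    (hστ : ∀ x, σ (τ x) = x) [RingHomSurjective σ]
    (T : V →ₛₗ[σ] V) (R : Submodule E V) (hR : R.map T ≤ R)
    (s : Set V) (hs : LinearIndepOn E id s) (hspan : Submodule.span E s = R.map T)
    (hT : ∀ v ∈ s, T v = 0 ∨ T v ∈ s) :
    ∃ b : Set V, LinearIndepOn E id b ∧ Submodule.span E b = R ∧
      ∀ v ∈ b, T v = 0 ∨ T v ∈ b := by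
  have hsR : s ⊆ R.map T := by rw [← hspan]; exact Submodule.subset_span
  set P : Set V := {v | v ∈ R ∧ (T v = 0 ∨ T v ∈ s)} with hP
  have hsP : s ⊆ P := fun v hv => ⟨hR (hsR hv), hT v hv⟩
  obtain ⟨b, hbP, hsb, hPb, hb⟩ := exists_linearIndepOn_id_extension hs hsP
  refine ⟨b, hb, le_antisymm ?_ ?_, ?_⟩
  · exact Submodule.span_le.2 fun v hv => (hbP hv).1
  · intro v hv
    have key : ∀ w ∈ Submodule.span E s, ∃ p ∈ Submodule.span E P, T p = w := by
      intro w hw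
      induction hw using Submodule.span_induction with
      | mem x hx =>
        obtain ⟨p, hp, rfl⟩ := hsR hx
        exact ⟨p, Submodule.subset_span ⟨hp, Or.inr hx⟩, rfl⟩
      | zero => exact ⟨0, Submodule.zero_mem _, map_zero T⟩
      | add x y _ _ hx hy =>
        obtain ⟨p, hp, rfl⟩ := hx
        obtain ⟨q, hq, rfl⟩ := hy
        exact ⟨p + q, Submodule.add_mem _ hp hq, map_add T p q⟩
      | smul a x _ hx =>
        obtain ⟨p, hp, rfl⟩ := hx
        exact ⟨τ a • p, Submodule.smul_mem _ _ hp, by rw [map_smulₛₗ, hστ]⟩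
    obtain ⟨p, hp, hpv⟩ := key (T v) (by rw [hspan]; exact Submodule.mem_map_of_mem hv)
    have hpR : p ∈ R := (Submodule.span_le.2 fun v hv => hv.1 : Submodule.span E P ≤ R) hp
    have hd : v - p ∈ P := ⟨R.sub_mem hv hpR, Or.inl (by rw [map_sub, hpv, sub_self])⟩
    have hle : Submodule.span E P ≤ Submodule.span E b := Submodule.span_le.2 hPb
    have := Submodule.add_mem _ (hle (Submodule.subset_span hd)) (hle hp)
    simpa using this
  · intro v hv
    exact (hbP hv).2.imp id fun h => hsb h

theorem jordan_all {E V : Type*} [Field E] [AddCommGroup V] [Module E V] (σ τ : E →+* E)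
    (hστ : ∀ x, σ (τ x) = x) [RingHomSurjective σ]
    (T : V →ₛₗ[σ] V) (N : ℕ) :
    ∀ (R : Submodule E V), R.map T ≤ R → (∀ v ∈ R, T^[N] v = 0) →
    ∃ b : Set V, LinearIndepOn E id b ∧ Submodule.span E b = R ∧
      ∀ v ∈ b, T v = 0 ∨ T v ∈ b := by
  induction N with
  | zero =>
    intro R _ h
    refine ⟨∅, linearIndepOn_empty _ _, ?_, by simp⟩
    rw [Submodule.span_empty, eq_comm, Submodule.eq_bot_iff]
    exact h
  | succ N ih =>
    intro R hR h
    obtain ⟨s, hs, hspan, hT⟩ := ih (R.map T) (Submodule.map_mono hR) (by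
      rintro _ ⟨v, hv, rfl⟩
      exact h v hv)
    exact jordan_step σ τ hστ T R hR s hs hspan hT

/-- Let `E/F` be a quadratic extension of fields of characteristic different from 2, with
nontrivial `F`-automorphism `σ : x ↦ x̄` applied entrywise to matrices. If `β ∈ M_n(E)` is
such that `β β̄` is nilpotent, then there exists `g ∈ GL_n(E)` such that `g β ḡ⁻¹` has all of
its entries in `F`, equivalently is fixed by entrywise conjugation. -/
theorem stmt_11 (n : ℕ) (F E : Type*) [Field F] [Field E] [Algebra F E]
    (hchar : ringChar F ≠ 2) (hdim : Module.finrank F E = 2)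
    (σ : E ≃ₐ[F] E) (hσinv : ∀ x : E, σ (σ x) = x) (hσne : σ ≠ AlgEquiv.refl)
    (β : Matrix (Fin n) (Fin n) E) (hβ : IsNilpotent (β * β.map σ)) :
    ∃ g : Matrix (Fin n) (Fin n) E, IsUnit g ∧
      (g * β * (g.map σ)⁻¹).map σ = g * β * (g.map σ)⁻¹ ∧
      ∀ i j, (g * β * (g.map σ)⁻¹) i j ∈ Set.range (algebraMap F E) := by
  classical
  let s : E →+* E := (σ : E →+* E)
  have : RingHomSurjective s := ⟨σ.surjective⟩
  let T : (Fin n → E) →ₛₗ[s] (Fin n → E) :=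
    { toFun := fun v => β.mulVec (fun i => σ (v i))
      map_add' := fun v w => by
        rw [← Matrix.mulVec_add]; congr 1; ext i; simp
      map_smul' := fun a v => by
        rw [← Matrix.mulVec_smul]; congr 1; ext i; simp [s] }
  have hTdef : ∀ v, T v = β.mulVec (fun i => σ (v i)) := fun v => rfl
  have hT2 : ∀ v, T (T v) = (β * β.map σ).mulVec v := by
    intro v
    rw [hTdef, hTdef, ← Matrix.mulVec_mulVec]
    congr 1
    ext i
    simp [Matrix.mulVec, dotProduct, hσinv]
  obtain ⟨m, hm⟩ := hβ
  have hTm : ∀ k v, T^[2 * k] v = ((β * β.map σ) ^ k).mulVec v := by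
    intro k
    induction k with
    | zero => intro v; simp
    | succ k ih =>
      intro v
      rw [show 2 * (k + 1) = 2 * k + 1 + 1 by ring, Function.iterate_succ_apply,
        Function.iterate_succ_apply, ih, hT2, Matrix.mulVec_mulVec, ← pow_succ]
  obtain ⟨b, hb, hspan, hTb⟩ := jordan_all s s hσinv T (2 * m) ⊤ le_top (by
    intro v _
    rw [hTm, hm, Matrix.zero_mulVec])
  let e0 : Module.Basis b E (Fin n → E) := Module.Basis.mk (v := fun x : b => (x : Fin n → E)) hb (by
    rw [Subtype.range_coe, hspan])
  let e : Module.Basis (Fin n) E (Fin n → E) :=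
    e0.reindex (e0.indexEquiv (Pi.basisFun E (Fin n)))
  have he : ∀ j, T (e j) = 0 ∨ ∃ i, T (e j) = e i := by
    intro j
    have h1 : ∀ j, e j = ((e0.indexEquiv (Pi.basisFun E (Fin n))).symm j : Fin n → E) := by
      intro j
      rw [Module.Basis.reindex_apply]
      exact Module.Basis.mk_apply hb _ _
    rcases hTb (e j) (by rw [h1]; exact Subtype.coe_prop _) with h | h
    · exact Or.inl h
    · refine Or.inr ⟨e0.indexEquiv (Pi.basisFun E (Fin n)) ⟨_, h⟩, ?_⟩
      rw [h1 (e0.indexEquiv (Pi.basisFun E (Fin n)) ⟨_, h⟩), Equiv.symm_apply_apply]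
  have hJ : ∀ j, ∃ c : Fin n → F, T (e j) = ∑ i, algebraMap F E (c i) • e i := by
    intro j
    rcases he j with h | ⟨i, h⟩
    · exact ⟨0, by simp [h]⟩
    · refine ⟨Pi.single i 1, ?_⟩
      rw [h, Finset.sum_eq_single i]
      · simp
      · intro k _ hk; simp [hk]
      · simp
  choose c hc using hJ
  let B : Matrix (Fin n) (Fin n) E := Matrix.of fun i j => e j i
  let J : Matrix (Fin n) (Fin n) E := Matrix.of fun i j => algebraMap F E (c j i)
  have hB : IsUnit B := by
    rw [← Matrix.isUnit_transpose, ← Matrix.linearIndependent_rows_iff_isUnit]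
    exact e.linearIndependent
  have hBJ : β * B.map σ = B * J := by
    ext i j
    have := congrFun (hc j) i
    rw [hTdef] at this
    simpa [Matrix.mulVec, dotProduct, Matrix.mul_apply, B, J, mul_comm, Algebra.smul_def] using this
  have hdet : IsUnit B.det := (Matrix.isUnit_iff_isUnit_det B).1 hB
  have hinv : ((B⁻¹).map σ)⁻¹ = B.map σ := by
    apply Matrix.inv_eq_right_inv
    have := congrArg (fun M : Matrix (Fin n) (Fin n) E => M.map σ) (Matrix.nonsing_inv_mul B hdet)
    simpa [Matrix.map_mul] using this
  have hfin : B⁻¹ * β * ((B⁻¹).map σ)⁻¹ = J := by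
    rw [hinv, mul_assoc, hBJ, Matrix.nonsing_inv_mul_cancel_left _ _ hdet]
  refine ⟨B⁻¹, (Matrix.isUnit_nonsing_inv_iff).2 hB, ?_, ?_⟩
  · rw [hfin]; ext i j; simp [J]
  · rw [hfin]; exact fun i j => ⟨c j i, rfl⟩
end

section
/- With the notation of the setup, for every u ∈ U_S the matrix w u w — which equals the entrywise conjugate ū of u — is conjugate to u by an element of H: there exists h ∈ H with w u w = h u h⁻¹. -/
noncomputable section

open Module in
theorem guo_key {E : Type*} [Field E] (σ : E →+* E) [RingHomInvPair σ σ] :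
    ∀ (d : ℕ) (V V' : Type _) [AddCommGroup V] [Module E V] [AddCommGroup V'] [Module E V']
      [FiniteDimensional E V] [FiniteDimensional E V']
      (T : V →ₛₗ[σ] V) (T' : V' →ₛₗ[σ] V') (θ : V →ₛₗ[σ] V'),
      finrank E V = d → Function.Bijective θ → (∀ v, θ (T v) = T' (θ v)) →
      (∃ k : ℕ, ∀ v, T^[k] v = 0) →
      ∃ γ : V →ₗ[E] V', Function.Injective γ ∧ ∀ v, γ (T v) = T' (γ v) := by
  intro d
  induction d using Nat.strong_induction_on with
  | _ d ih =>
  intro V V' _ _ _ _ _ _ T T' θ hd hθ hc hnil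
  obtain ⟨k, hk⟩ := hnil
  by_cases hsurj : Function.Surjective T
  · have h0 : ∀ v : V, v = 0 := by
      intro v
      obtain ⟨x, rfl⟩ := hsurj.iterate k v
      exact hk x
    refine ⟨0, fun a b _ => by rw [h0 a, h0 b], fun v => by simp⟩
  -- the range
  have hW'mem : ∀ w : LinearMap.range T, θ (w : V) ∈ LinearMap.range T' := by
    rintro ⟨_, x, rfl⟩
    exact ⟨θ x, (hc x).symm⟩
  have hWconv : ∀ v, θ v ∈ LinearMap.range T' → v ∈ LinearMap.range T := by
    rintro v ⟨y, hy⟩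
    obtain ⟨x, rfl⟩ := hθ.2 y
    exact ⟨x, hθ.1 (by rw [hc, hy])⟩
  have hlt : finrank E (LinearMap.range T) < d := by
    rw [← hd]
    apply Submodule.finrank_lt
    intro h
    exact hsurj (LinearMap.range_eq_top.1 h)
  obtain ⟨g, hginj, hg⟩ := ih _ hlt (LinearMap.range T) (LinearMap.range T')
    (T.rangeRestrict.comp (LinearMap.range T).subtype)
    (T'.rangeRestrict.comp (LinearMap.range T').subtype)
    ((θ.comp (LinearMap.range T).subtype).codRestrict (LinearMap.range T') hW'mem) rfl
    (by
      constructor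
      · intro a b hab
        have := congrArg Subtype.val hab
        exact Subtype.ext (hθ.1 this)
      · rintro ⟨y, hy⟩
        obtain ⟨x, rfl⟩ := hθ.2 y
        exact ⟨⟨x, hWconv x hy⟩, rfl⟩)
    (by
      intro v
      apply Subtype.ext
      exact hc v)
    ⟨k, by
      have : ∀ j (v : LinearMap.range T), (((T.rangeRestrict.comp
          (LinearMap.range T).subtype)^[j] v : LinearMap.range T) : V) = T^[j] v := by
        intro j
        induction j with
        | zero => intro v; rfl
        | succ j ihj => intro v; rw [Function.iterate_succ_apply, Function.iterate_succ_apply, ihj]; rfl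
      intro v
      apply Subtype.ext
      rw [this, hk]; rfl⟩
  have hg' : ∀ w : LinearMap.range T, (g (T.rangeRestrict w) : V') = T' (g w) := by
    intro w
    exact congrArg Subtype.val (hg w)
  -- a first lift
  obtain ⟨γ₀, hγ₀⟩ : ∃ γ₀ : V →ₗ[E] V', ∀ v, T' (γ₀ v) = g (T.rangeRestrict v) := by
    let b := finBasis E V
    have hx : ∀ i, ∃ x, T' x = g (T.rangeRestrict (b i)) := fun i => (g (T.rangeRestrict (b i))).2
    choose x hx using hx
    refine ⟨b.constr E x, ?_⟩
    have : T'.comp (b.constr E x) = ((LinearMap.range T').subtype.comp g).comp T.rangeRestrict := by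
      apply b.ext
      intro i
      simp [hx]
    intro v
    exact LinearMap.congr_fun this v
  -- complement of range ⊓ ker in ker
  obtain ⟨K2, hK2le, hK2d, hK2s⟩ : ∃ K2 : Submodule E V, K2 ≤ LinearMap.ker T ∧
      Disjoint (LinearMap.range T) K2 ∧
      ∀ v ∈ LinearMap.ker T, ∃ a ∈ LinearMap.range T, ∃ b ∈ K2, a + b = v := by
    obtain ⟨C, hC⟩ := exists_isCompl (Submodule.comap (LinearMap.ker T).subtype (LinearMap.range T))
    refine ⟨C.map (LinearMap.ker T).subtype, Submodule.map_subtype_le _ _, ?_, ?_⟩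
    · rw [Submodule.disjoint_def]
      rintro _ hx ⟨y, hy, rfl⟩
      have := Submodule.disjoint_def.1 hC.disjoint y hx hy
      simp [this]
    · intro v hv
      have : (⟨v, hv⟩ : LinearMap.ker T) ∈ Submodule.comap (LinearMap.ker T).subtype (LinearMap.range T) ⊔ C := by
        rw [hC.sup_eq_top]; trivial
      obtain ⟨a, ha, b, hb, hab⟩ := Submodule.mem_sup.1 this
      exact ⟨a, ha, b, ⟨b, hb, rfl⟩, congrArg Subtype.val hab⟩
  -- linear injection K2 → θ(K2)
  obtain ⟨κ, hκi, hκm⟩ : ∃ κ : K2 →ₗ[E] V', Function.Injective κ ∧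
      ∀ x, ∃ y ∈ K2, κ x = θ y := by
    let b := finBasis E K2
    have key : ∀ x, b.constr E (fun i => θ (b i : V)) x =
        θ ((∑ i, σ (b.repr x i) • b i : K2) : V) := by
      intro x
      rw [Basis.constr_apply_fintype]
      simp [Basis.equivFun_apply, map_sum]
    refine ⟨b.constr E (fun i => θ (b i : V)), ?_, fun x => ⟨_, Subtype.property _, key x⟩⟩
    rw [injective_iff_map_eq_zero]
    intro x hx
    rw [key] at hx
    have h1 := hθ.1 (hx.trans (map_zero θ).symm)
    have h2 : (∑ i, σ (b.repr x i) • b i : K2) = 0 := Subtype.ext h1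
    have h3 := fun i => Fintype.linearIndependent_iff.1 b.linearIndependent _ h2 i
    apply b.repr.injective
    ext i
    simpa using h3 i
  obtain ⟨N, hK2N, hN'⟩ := hK2d.symm.exists_isCompl
  have hN := hN'.symm
  have hκT : ∀ x, T' (κ x) = 0 := by
    intro x
    obtain ⟨y, hy, hxy⟩ := hκm x
    rw [hxy, ← hc, LinearMap.mem_ker.1 (hK2le hy), map_zero]
  have hγK : ∀ x ∈ LinearMap.ker T, T' (γ₀ x) = 0 := by
    intro x hx
    have : T.rangeRestrict x = 0 := Subtype.ext (LinearMap.mem_ker.1 hx)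
    rw [hγ₀, this, map_zero]; rfl
  let eW : LinearMap.range T →ₗ[E] LinearMap.ker T' :=
    ((LinearMap.range T').subtype.comp g - γ₀.comp (LinearMap.range T).subtype).codRestrict _ (by
      intro w
      rw [LinearMap.mem_ker]
      change T' ((g w : V') - γ₀ w) = 0
      rw [map_sub, hγ₀, hg', sub_self])
  let eK : K2 →ₗ[E] LinearMap.ker T' :=
    (κ - γ₀.comp K2.subtype).codRestrict _ (by
      intro x
      rw [LinearMap.mem_ker]
      change T' (κ x - γ₀ x) = 0
      rw [map_sub, hκT, hγK x (hK2le x.2), sub_self])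
  obtain ⟨eK', heK'⟩ := LinearMap.exists_extend eK
  let e : V →ₗ[E] LinearMap.ker T' := LinearMap.ofIsCompl hN eW (eK'.comp N.subtype)
  have heW : ∀ w : LinearMap.range T, (e w : V') = g w - γ₀ w := by
    intro w
    have : e w = eW w := LinearMap.ofIsCompl_apply_left hN w
    rw [this]; rfl
  have heK : ∀ x : K2, (e x : V') = κ x - γ₀ x := by
    intro x
    have h1 : e x = eK' x := LinearMap.ofIsCompl_apply_right hN (⟨x, hK2N x.2⟩ : N)
    have h2 : eK' x = eK x := LinearMap.congr_fun heK' x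
    rw [h1, h2]; rfl
  let γ : V →ₗ[E] V' := γ₀ + (LinearMap.ker T').subtype.comp e
  have hγW : ∀ w : LinearMap.range T, γ w = g w := by
    intro w
    change γ₀ w + (e w : V') = _
    rw [heW]; abel
  have hγK2 : ∀ x : K2, γ x = κ x := by
    intro x
    change γ₀ x + (e x : V') = _
    rw [heK]; abel
  have hγT : ∀ v, T' (γ v) = g (T.rangeRestrict v) := by
    intro v
    change T' (γ₀ v + (e v : V')) = _
    rw [map_add, LinearMap.mem_ker.1 (e v).2, hγ₀, add_zero]
  refine ⟨γ, ?_, fun v => ?_⟩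
  · rw [injective_iff_map_eq_zero]
    intro v hv
    have h1 : g (T.rangeRestrict v) = 0 := Subtype.ext (by rw [← hγT, hv, map_zero]; rfl)
    have h2 : T.rangeRestrict v = 0 := hginj (h1.trans (map_zero g).symm)
    have h3 : v ∈ LinearMap.ker T := congrArg Subtype.val h2
    obtain ⟨a, ha, b, hb, rfl⟩ := hK2s v h3
    have h4 : (g ⟨a, ha⟩ : V') + κ ⟨b, hb⟩ = 0 := by
      rw [← hγW, ← hγK2, ← map_add]; exact hv
    obtain ⟨y, hy, hxy⟩ := hκm ⟨b, hb⟩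
    have h5 : θ y ∈ LinearMap.range T' := by
      rw [← hxy, eq_neg_of_add_eq_zero_right h4]
      exact neg_mem (g ⟨a, ha⟩).2
    have h6 : y = 0 := Submodule.disjoint_def.1 hK2d y (hWconv y h5) hy
    rw [h6, map_zero] at hxy
    have h7 : (⟨b, hb⟩ : K2) = 0 := hκi (hxy.trans (map_zero κ).symm)
    rw [hxy, add_zero] at h4
    have h8 : g ⟨a, ha⟩ = 0 := Subtype.ext h4
    have h9 : (⟨a, ha⟩ : LinearMap.range T) = 0 := hginj (h8.trans (map_zero g).symm)
    have ha0 : a = 0 := congrArg Subtype.val h9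
    have hb0 : b = 0 := congrArg Subtype.val h7
    rw [ha0, hb0, add_zero]
  · rw [hγT]
    exact hγW (T.rangeRestrict v)

/-- Uniqueness of unipotent square roots, intertwined form. -/
theorem guo_sqrt {R : Type*} [Ring R] (h2 : IsUnit (2 : R)) (a a' g : R)
    (ha : IsNilpotent (a - 1)) (ha' : IsNilpotent (a' - 1)) (h : g * (a * a) = a' * a' * g) :
    g * a = a' * g := by
  have hu : IsUnit (a' + 1) := by
    have : a' + 1 = (a' - 1) + 2 := by rw [← one_add_one_eq_two]; abel
    rw [this]
    exact ha'.isUnit_add_right_of_commute h2 (Commute.ofNat_right _ 2)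
  have hD : (a' + 1) * (g * a - a' * g) = (g * a - a' * g) * (-(a - 1)) := by
    have : g * (a * a) - a' * a' * g = 0 := sub_eq_zero.2 h
    rw [← sub_eq_zero, ← this]; noncomm_ring
  have hpow : ∀ k : ℕ, (a' + 1) ^ k * (g * a - a' * g) = (g * a - a' * g) * (-(a - 1)) ^ k := by
    intro k
    exact ((show SemiconjBy (g * a - a' * g) (-(a - 1)) (a' + 1) from hD.symm).pow_right k).symm
  obtain ⟨k, hk⟩ := ha.neg
  have := hpow k
  rw [hk, mul_zero] at this
  exact sub_eq_zero.1 (((hu.pow k).mul_right_eq_zero).1 this)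

open Matrix in
theorem guo_mat {E : Type*} [Field E] (σ : E →+* E) [RingHomInvPair σ σ] {n : ℕ}
    (β : Matrix (Fin n) (Fin n) E) (hβ : IsNilpotent (β * β.map σ)) :
    ∃ γ : Matrix (Fin n) (Fin n) E, IsUnit γ ∧ γ * β = β.map σ * γ.map σ := by
  have hσ : ∀ x, σ (σ x) = x := fun x => RingHomInvPair.comp_apply_eq (σ := σ)
  let θ : (Fin n → E) →ₛₗ[σ] (Fin n → E) :=
    { toFun := fun v => σ ∘ v
      map_add' := fun a b => by ext; simp
      map_smul' := fun a b => by ext; simp }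
  have hθθ : ∀ v, θ (θ v) = v := fun v => by ext i; exact hσ _
  have hθm : ∀ (M : Matrix (Fin n) (Fin n) E) v, θ (M *ᵥ v) = M.map σ *ᵥ θ v := by
    intro M v
    ext i
    exact RingHom.map_mulVec σ M v i
  have hmm : (β.map σ).map σ = β := by ext i j; exact hσ _
  have hT : ∀ v, β *ᵥ θ (β *ᵥ θ v) = (β * β.map σ) *ᵥ v := by
    intro v
    rw [hθm, hθθ, mulVec_mulVec]
  obtain ⟨γ, hγi, hγ⟩ := guo_key σ n (Fin n → E) (Fin n → E)
    ((Matrix.mulVecLin β).comp θ) ((Matrix.mulVecLin (β.map σ)).comp θ) θ (by simp)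
    (Function.Involutive.bijective hθθ)
    (by
      intro v
      change θ (β *ᵥ θ v) = β.map σ *ᵥ θ (θ v)
      rw [hθm])
    (by
      obtain ⟨k, hk⟩ := hβ
      refine ⟨2 * k, fun v => ?_⟩
      have : ∀ (j : ℕ) v, (((Matrix.mulVecLin β).comp θ)^[2])^[j] v = ((β * β.map σ) ^ j) *ᵥ v := by
        intro j
        induction j with
        | zero => intro v; simp
        | succ j ih =>
          intro v
          rw [Function.iterate_succ_apply, ih, pow_succ, ← mulVec_mulVec]
          congr 1
          exact hT v
      rw [Function.iterate_mul, this, hk, zero_mulVec])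
  refine ⟨LinearMap.toMatrix' γ, ?_, ?_⟩
  · rw [← Matrix.mulVec_injective_iff_isUnit]
    intro a b hab
    apply hγi
    simpa using hab
  · have key : ∀ v, (LinearMap.toMatrix' γ * β) *ᵥ v =
        (β.map σ * (LinearMap.toMatrix' γ).map σ) *ᵥ v := by
      intro v
      have := hγ (θ v)
      have h1 : γ (β *ᵥ θ (θ v)) = β.map σ *ᵥ θ (γ (θ v)) := this
      rw [← LinearMap.toMatrix'_mulVec γ, ← LinearMap.toMatrix'_mulVec γ, hθm, hθθ] at h1
      rw [← mulVec_mulVec, ← mulVec_mulVec]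
      exact h1
    exact Matrix.mulVec_injective (funext key)

/-- Proposition 4.3 of the paper: with `w = [[0, I_n], [I_n, 0]]`, for every `u ∈ U_S` the
matrix `w u w`, which equals the entrywise conjugate `ū` of `u`, is conjugate to `u` by an
element of `H`. -/
theorem stmt_12 (n : ℕ) (F E : Type*) [Field F] [Field E] [Algebra F E]
    (hchar : ringChar F ≠ 2) (hdim : Module.finrank F E = 2)
    (σ : E ≃ₐ[F] E) (hσinv : ∀ x : E, σ (σ x) = x) (hσne : σ ≠ AlgEquiv.refl)
    (δ : E) (hδ0 : δ ≠ 0) (hδ2 : ∃ c : F, algebraMap F E c = δ ^ 2)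
    (hδgen : Algebra.adjoin F {δ} = ⊤)
    (w : Matrix (Fin n ⊕ Fin n) (Fin n ⊕ Fin n) E)
    (hw : w = Matrix.fromBlocks 0 1 1 0) :
    ∀ u ∈ GuoUS E n (⇑σ) δ,
      w * u * w = u.map σ ∧ ∃ h ∈ GuoH E n (⇑σ), w * u * w = h * u * h⁻¹ := by
  intro u hu
  obtain ⟨⟨-, hnil⟩, ⟨⟨⟨α, β, rfl⟩, hunit⟩, hS⟩⟩ := hu
  have hmap : ∀ M : Matrix (Fin n) (Fin n) E, (M.map σ).map σ = M := by
    intro M; ext i j; exact hσinv _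
  have hwu : w * gmat (⇑σ) α β * w = (gmat (⇑σ) α β).map σ := by
    rw [hw]
    simp [gmat, Matrix.fromBlocks_multiply, Matrix.fromBlocks_map, hmap]
  refine ⟨hwu, ?_⟩
  have h2F : (2 : F) ≠ 0 := Ring.two_ne_zero hchar
  have h2E : (2 : E) ≠ 0 := by
    have := (map_ne_zero (algebraMap F E)).2 h2F
    rwa [map_ofNat] at this
  -- the inverse of `u`
  have hεinv : (Guoeps E n δ)⁻¹ = δ⁻¹ • Matrix.fromBlocks 1 0 0 (-1) := by
    apply Matrix.inv_eq_right_inv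
    simp [Guoeps, Matrix.fromBlocks_multiply, hδ0, smul_smul]
  have hconj : Guoeps E n δ * gmat (⇑σ) α β * (Guoeps E n δ)⁻¹ =
      Matrix.fromBlocks α (-β) (-(β.map σ)) (α.map σ) := by
    rw [hεinv]
    simp [Guoeps, gmat, Matrix.fromBlocks_multiply, hδ0, smul_smul]
  rw [hconj] at hS
  have hdet := (Matrix.isUnit_iff_isUnit_det _).1 hunit
  have hmul : gmat (⇑σ) α β * Matrix.fromBlocks α (-β) (-(β.map σ)) (α.map σ) = 1 := by
    rw [hS]; exact Matrix.mul_nonsing_inv _ hdet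
  have hmul' : Matrix.fromBlocks α (-β) (-(β.map σ)) (α.map σ) * gmat (⇑σ) α β = 1 := by
    rw [hS]; exact Matrix.nonsing_inv_mul _ hdet
  have hαα : α * α = 1 + β * β.map σ := by
    have h := hmul
    rw [gmat, Matrix.fromBlocks_multiply, ← Matrix.fromBlocks_one, Matrix.fromBlocks_inj] at h
    rw [← h.1]; simp
  -- `α` is unipotent
  have hαnil : IsNilpotent (α - 1) := by
    have hcomm : Commute (gmat (⇑σ) α β)
        (Matrix.fromBlocks α (-β) (-(β.map σ)) (α.map σ)) := hmul.trans hmul'.symm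
    have hsum : gmat (⇑σ) α β + Matrix.fromBlocks α (-β) (-(β.map σ)) (α.map σ) - 2 =
        (gmat (⇑σ) α β - 1) * ((gmat (⇑σ) α β - 1) *
          Matrix.fromBlocks α (-β) (-(β.map σ)) (α.map σ)) := by
      rw [sub_mul _ _ (Matrix.fromBlocks α _ _ _), hmul, one_mul, mul_sub, mul_one, sub_mul,
        hmul, one_mul, ← one_add_one_eq_two]
      abel
    have hn1 : IsNilpotent (gmat (⇑σ) α β +
        Matrix.fromBlocks α (-β) (-(β.map σ)) (α.map σ) - 2) := by
      rw [hsum]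
      refine Commute.isNilpotent_mul_right ?_ hnil
      have c1 : Commute (gmat (⇑σ) α β - 1)
          (Matrix.fromBlocks α (-β) (-(β.map σ)) (α.map σ)) :=
        hcomm.sub_left (Commute.one_left _)
      exact (Commute.refl _).mul_right c1
    have hblock : gmat (⇑σ) α β + Matrix.fromBlocks α (-β) (-(β.map σ)) (α.map σ) - 2 =
        Matrix.fromBlocks ((2 : E) • (α - 1)) 0 0 ((2 : E) • (α.map σ - 1)) := by
      rw [sub_eq_iff_eq_add, two_smul, two_smul, ← one_add_one_eq_two, ← Matrix.fromBlocks_one, gmat,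
        Matrix.fromBlocks_add, Matrix.fromBlocks_add, Matrix.fromBlocks_add,
        Matrix.fromBlocks_inj]
      refine ⟨by abel, by abel, by abel, by abel⟩
    rw [hblock] at hn1
    obtain ⟨k, hk⟩ := hn1
    rw [Matrix.fromBlocks_diagonal_pow, ← Matrix.fromBlocks_zero, Matrix.fromBlocks_inj,
      smul_pow] at hk
    refine ⟨k, ?_⟩
    exact (smul_eq_zero.1 hk.1).resolve_left (pow_ne_zero k h2E)
  have hβnil : IsNilpotent (β * β.map σ) := by
    have : β * β.map σ = (α - 1) * (α + 1) := by
      rw [sub_mul, mul_add, hαα, mul_one, one_mul]; abel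
    rw [this]
    refine Commute.isNilpotent_mul_right ?_ hαnil
    exact ((Commute.refl α).add_right (Commute.one_right _)).sub_left (Commute.one_left _)
  have : RingHomInvPair (σ : E →+* E) (σ : E →+* E) :=
    ⟨RingHom.ext hσinv, RingHom.ext hσinv⟩
  obtain ⟨γ, hγu, hγ⟩ := guo_mat (σ : E →+* E) β hβnil
  replace hγ : γ * β = β.map σ * γ.map σ := hγ
  have hmm : ∀ A B : Matrix (Fin n) (Fin n) E, (A * B).map σ = A.map σ * B.map σ :=
    fun A B => Matrix.map_mul (f := (σ : E →+* E))
  have hγ' : γ.map σ * β.map σ = β * γ := by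
    have := congrArg (fun M : Matrix (Fin n) (Fin n) E => M.map σ) hγ
    simpa [hmm, hmap] using this
  have hσα : α.map σ * α.map σ = 1 + β.map σ * β := by
    have := congrArg (fun M : Matrix (Fin n) (Fin n) E => M.map σ) hαα
    simp only [hmm] at this
    rw [this]
    have h1 : (1 + β * β.map σ).map σ = (1 : Matrix (Fin n) (Fin n) E).map σ +
        (β * β.map σ).map σ := by
      ext i j; exact map_add σ _ _
    rw [h1, hmm, hmap]
    simp
  have hσnil : IsNilpotent (α.map σ - 1) := by
    have := hαnil.map ((σ : E →+* E).mapMatrix (m := Fin n))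
    rw [map_sub, map_one] at this
    exact this
  have h2M : IsUnit (2 : Matrix (Fin n) (Fin n) E) := by
    have := (IsUnit.mk0 (2 : E) h2E).map (algebraMap E (Matrix (Fin n) (Fin n) E))
    rwa [map_ofNat] at this
  have hγα : γ * α = α.map σ * γ := by
    apply guo_sqrt h2M _ _ _ hαnil hσnil
    rw [hαα, hσα, mul_add, add_mul, ← mul_assoc, hγ, mul_assoc, hγ', mul_one, one_mul, mul_assoc]
  have hγα' : γ.map σ * α.map σ = α * γ.map σ := by
    have := congrArg (fun M : Matrix (Fin n) (Fin n) E => M.map σ) hγα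
    simpa [hmm, hmap] using this
  have hγσu : IsUnit (γ.map σ) := hγu.map ((σ : E →+* E).mapMatrix (m := Fin n))
  have hHu : IsUnit (gmat (⇑σ) γ 0) := by
    rw [Matrix.isUnit_iff_isUnit_det, gmat]
    have : (0 : Matrix (Fin n) (Fin n) E).map σ = 0 := by ext; simp
    rw [this, Matrix.det_fromBlocks_zero₂₁]
    exact ((Matrix.isUnit_iff_isUnit_det _).1 hγu).mul ((Matrix.isUnit_iff_isUnit_det _).1 hγσu)
  refine ⟨gmat (⇑σ) γ 0, ⟨⟨γ, rfl⟩, hHu⟩, ?_⟩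
  rw [hwu]
  have hfin : (gmat (⇑σ) α β).map σ * gmat (⇑σ) γ 0 = gmat (⇑σ) γ 0 * gmat (⇑σ) α β := by
    simp [gmat, Matrix.fromBlocks_multiply, Matrix.fromBlocks_map, hmap, hγ, hγ', hγα, hγα']
  rw [← hfin, mul_assoc, Matrix.mul_nonsing_inv _ ((Matrix.isUnit_iff_isUnit_det _).1 hHu), mul_one]
end
end

section
/- With the notation of the setup, if g ∈ H · U_S · w · H then g⁻¹ ∈ H · U_S · w · H. -/
noncomputable section

open Matrix in
theorem aux_eps_conj {E : Type*} [Field E] {n : ℕ} (δ : E) (hδ0 : δ ≠ 0)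
    (x : Matrix (Fin n ⊕ Fin n) (Fin n ⊕ Fin n) E) :
    Guoeps E n δ * x * (Guoeps E n δ)⁻¹ =
      fromBlocks 1 0 0 (-1) * x * fromBlocks 1 0 0 (-1) := by
  have h : (Guoeps E n δ)⁻¹ = δ⁻¹ • fromBlocks 1 0 0 (-1) := by
    apply Matrix.inv_eq_right_inv
    simp [Guoeps, fromBlocks_multiply, smul_smul, hδ0]
  rw [h]
  simp [Guoeps, smul_smul, hδ0]

open Matrix in
theorem aux_H_inv {E : Type*} [Field E] {n : ℕ} (σ : E →+* E)
    (h : Matrix (Fin n ⊕ Fin n) (Fin n ⊕ Fin n) E) (hh : h ∈ GuoH E n σ) :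
    h⁻¹ ∈ GuoH E n σ ∧ h * h⁻¹ = 1 := by
  obtain ⟨⟨α, rfl⟩, hu⟩ := hh
  have hd : IsUnit (gmat σ α 0).det := (Matrix.isUnit_iff_isUnit_det _).1 hu
  have hα : IsUnit α.det := by
    have h0 : (0 : Matrix (Fin n) (Fin n) E).map σ = 0 := by ext; simp
    rw [gmat, h0, det_fromBlocks_zero₂₁] at hd
    exact isUnit_of_mul_isUnit_left hd
  refine ⟨⟨⟨α⁻¹, ?_⟩, ?_⟩, Matrix.mul_nonsing_inv _ hd⟩
  · apply Matrix.inv_eq_right_inv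
    have h0 : (0 : Matrix (Fin n) (Fin n) E).map σ = 0 := by ext; simp
    have h1 : α.map σ * α⁻¹.map σ = 1 := by
      rw [← Matrix.map_mul, Matrix.mul_nonsing_inv _ hα]
      simp
    rw [gmat, gmat, h0, fromBlocks_multiply]
    simp [h1, Matrix.mul_nonsing_inv _ hα]
  · exact (Matrix.isUnit_nonsing_inv_iff).2 hu

theorem aux_nilp {R : Type*} [Ring R] (c d x : R) (h1 : d * c = 1)
    (hx : IsNilpotent x) : IsNilpotent (c * x * d) := by
  obtain ⟨k, hk⟩ := hx
  refine ⟨k + 1, ?_⟩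
  have : ∀ m : ℕ, (c * x * d) ^ (m + 1) = c * x ^ (m + 1) * d := by
    intro m
    induction m with
    | zero => simp
    | succ m ih =>
      rw [pow_succ, ih, pow_succ x (m + 1)]
      calc c * x ^ (m + 1) * d * (c * x * d) = c * x ^ (m + 1) * (d * c) * x * d := by noncomm_ring
        _ = _ := by rw [h1]; noncomm_ring
  rw [this, pow_succ, hk]
  simp

open Matrix in
theorem aux_US {E : Type*} [Field E] {n : ℕ} (σ : E →+* E) (hσ : ∀ x, σ (σ x) = x)
    (δ : E) (hδ0 : δ ≠ 0) (w : Matrix (Fin n ⊕ Fin n) (Fin n ⊕ Fin n) E)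
    (hw : w = fromBlocks 0 1 1 0)
    (u : Matrix (Fin n ⊕ Fin n) (Fin n ⊕ Fin n) E) (hu : u ∈ GuoUS E n σ δ) :
    w * u⁻¹ * w ∈ GuoUS E n σ δ := by
  obtain ⟨⟨⟨⟨α, β, hαβ⟩, huu⟩, hnil⟩, -, hS⟩ := hu
  rw [aux_eps_conj δ hδ0] at hS
  have hd : IsUnit u.det := (Matrix.isUnit_iff_isUnit_det _).1 huu
  have hww : w * w = 1 := by simp [hw, fromBlocks_multiply]
  have hwu : IsUnit w := ⟨⟨w, w, hww, hww⟩, rfl⟩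
  set J : Matrix (Fin n ⊕ Fin n) (Fin n ⊕ Fin n) E := fromBlocks 1 0 0 (-1) with hJ
  have hJJ : J * J = 1 := by simp [hJ, fromBlocks_multiply]
  have hJw : J * w = - (w * J) := by
    simp [hJ, hw, fromBlocks_multiply, fromBlocks_neg]
  have hwJ : w * J = - (J * w) := by rw [hJw, neg_neg]
  have hG : w * u⁻¹ * w ∈ GuoG E n σ := by
    refine ⟨⟨α.map σ, -β.map σ, ?_⟩, ?_⟩
    · rw [← hS, hαβ, gmat, gmat, hJ, hw]
      simp only [fromBlocks_multiply]
      congr 1 <;> · ext i j; simp [hσ]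
    · exact (hwu.mul (Matrix.isUnit_nonsing_inv_iff.2 huu)).mul hwu
  refine ⟨⟨hG, ?_⟩, hG, ?_⟩
  · have : w * u⁻¹ * w - 1 = (w * J) * (u - 1) * (J * w) := by
      rw [← hS, mul_sub, sub_mul, mul_one]
      congr 1
      · simp only [mul_assoc]
      · rw [mul_assoc, ← mul_assoc J, hJJ, one_mul, hww]
    rw [this]
    refine aux_nilp _ _ _ ?_ hnil
    rw [mul_assoc, ← mul_assoc w, hww, one_mul, hJJ]
  · rw [aux_eps_conj δ hδ0, ← hJ]
    symm
    apply Matrix.inv_eq_right_inv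
    have h2 : J * (w * u⁻¹ * w) * J = w * u * w := by
      have h3 : J * u⁻¹ * J = u := by
        rw [← hS]
        calc J * (J * u * J) * J = (J * J) * u * (J * J) := by noncomm_ring
          _ = u := by rw [hJJ]; simp
      calc J * (w * u⁻¹ * w) * J = (J * w) * u⁻¹ * (w * J) := by noncomm_ring
        _ = (-(w * J)) * u⁻¹ * (-(J * w)) := by rw [← hJw, ← hwJ]
        _ = w * (J * u⁻¹ * J) * w := by
            rw [neg_mul, neg_mul, mul_neg, neg_neg]; simp only [mul_assoc]
        _ = _ := by rw [h3]
    rw [h2]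
    calc w * u⁻¹ * w * (w * u * w) = w * u⁻¹ * (w * w) * u * w := by noncomm_ring
      _ = w * (u⁻¹ * u) * w := by rw [hww]; noncomm_ring
      _ = 1 := by rw [Matrix.nonsing_inv_mul _ hd, mul_one, hww]

/-- Guo's Lemma 3.3 (second statement), in characteristic different from 2: with
`w = [[0, I_n], [I_n, 0]]`, if `g ∈ H U_S w H` then `g⁻¹ ∈ H U_S w H`. -/
theorem stmt_13 (n : ℕ) (F E : Type*) [Field F] [Field E] [Algebra F E]
    (hchar : ringChar F ≠ 2) (hdim : Module.finrank F E = 2)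
    (σ : E ≃ₐ[F] E) (hσinv : ∀ x : E, σ (σ x) = x) (hσne : σ ≠ AlgEquiv.refl)
    (δ : E) (hδ0 : δ ≠ 0) (hδ2 : ∃ c : F, algebraMap F E c = δ ^ 2)
    (hδgen : Algebra.adjoin F {δ} = ⊤)
    (w : Matrix (Fin n ⊕ Fin n) (Fin n ⊕ Fin n) E)
    (hw : w = Matrix.fromBlocks 0 1 1 0)
    (g : Matrix (Fin n ⊕ Fin n) (Fin n ⊕ Fin n) E)
    (hg : ∃ h₁ ∈ GuoH E n (⇑σ), ∃ u ∈ GuoUS E n (⇑σ) δ, ∃ h₂ ∈ GuoH E n (⇑σ),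
      g = h₁ * u * w * h₂) :
    ∃ h₁ ∈ GuoH E n (⇑σ), ∃ u ∈ GuoUS E n (⇑σ) δ, ∃ h₂ ∈ GuoH E n (⇑σ),
      g⁻¹ = h₁ * u * w * h₂ := by
  obtain ⟨h₁, hh₁, u, hu, h₂, hh₂, rfl⟩ := hg
  obtain ⟨a1, b1⟩ := aux_H_inv (σ : E →+* E) h₁ hh₁
  obtain ⟨a2, b2⟩ := aux_H_inv (σ : E →+* E) h₂ hh₂
  have hU := aux_US (σ : E →+* E) hσinv δ hδ0 w hw u hu
  have hww : w * w = 1 := by simp [hw, Matrix.fromBlocks_multiply]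
  refine ⟨h₂⁻¹, a2, w * u⁻¹ * w, hU, h₁⁻¹, a1, ?_⟩
  have hwi : w⁻¹ = w := Matrix.inv_eq_right_inv hww
  rw [Matrix.mul_inv_rev, Matrix.mul_inv_rev, Matrix.mul_inv_rev, hwi]
  simp only [mul_assoc]
  rw [← mul_assoc w w, hww, one_mul]
end
end
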